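/- arXiv:1209.3981 — 6 statements merged into one kernel-verified Lean document; each statement's English description precedes it below -/
import Mathlib

section
/- Let n ≥ 1, p ≥ 1, and let Ω̃ ⊆ ℂⁿ be an open set. Define W̃ := {(z, v) ∈ Ω̃ × ℂᵖ : for every root ξ ∈ ℂ of the polynomial z_n^p + Σ_{j=1}^p v_j z_n^{p-j}, the point (z₁, …, z_{n-1}, ξ) belongs to Ω̃}. Then W̃ is an open subset of ℂⁿ × ℂᵖ, and the image of W̃ under the projection (z, v) ↦ z equals Ω̃. -/
/-- The set `W̃` of Lemma 3.2: pairs `(z, v) ∈ Ω̃ × ℂᵖ` such that for every root `ξ` of the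
generic polynomial `z_n^p + ∑_{j=1}^p v_j z_n^{p-j}`, the point `(z₁, …, z_{n-1}, ξ)`
(i.e. `z` with its last coordinate replaced by `ξ`) belongs to `Ω̃`.  Here `n = m + 1`. -/
def genericRootSet (m p : ℕ) (Ω : Set (Fin (m + 1) → ℂ)) :
    Set ((Fin (m + 1) → ℂ) × (Fin p → ℂ)) :=
  {zv | zv.1 ∈ Ω ∧ ∀ ξ : ℂ, ξ ^ p + ∑ j : Fin p, zv.2 j * ξ ^ (p - (j.1 + 1)) = 0 →
    Function.update zv.1 (Fin.last m) ξ ∈ Ω}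

theorem root_bound_aux (p : ℕ) (hp : 1 ≤ p) (v : Fin p → ℂ) (ξ : ℂ)
    (h : ξ ^ p + ∑ j : Fin p, v j * ξ ^ (p - (j.1 + 1)) = 0) :
    ‖ξ‖ ≤ 1 + ∑ j, ‖v j‖ := by
  have hS : 0 ≤ ∑ j, ‖v j‖ := Finset.sum_nonneg fun _ _ => norm_nonneg _
  by_cases h1 : ‖ξ‖ ≤ 1
  · linarith
  push Not at h1
  have h2 : ‖ξ‖ ^ p ≤ (∑ j, ‖v j‖) * ‖ξ‖ ^ (p - 1) := by
    rw [← norm_pow, eq_neg_of_add_eq_zero_left h, norm_neg, Finset.sum_mul]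
    refine norm_sum_le_of_le _ fun j _ => ?_
    rw [norm_mul, norm_pow]
    gcongr
    · exact h1.le
    · omega
  have h3 : ‖ξ‖ ^ p = ‖ξ‖ * ‖ξ‖ ^ (p - 1) := by
    rw [← pow_succ', Nat.sub_add_cancel hp]
  rw [h3] at h2
  have := le_of_mul_le_mul_right h2 (by positivity)
  linarith

theorem pow_expand_aux (p : ℕ) (a ξ : ℂ) :
    ξ ^ p + ∑ j : Fin p, ((-a) ^ (p - (p - (j.1 + 1))) * (p.choose (p - (j.1 + 1)) : ℂ)) *
      ξ ^ (p - (j.1 + 1)) = (ξ - a) ^ p := by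
  rw [sub_eq_add_neg, add_pow, Finset.sum_range_succ, ← Finset.sum_range_reflect,
    Finset.sum_range]
  simp only [Nat.sub_self, pow_zero, Nat.choose_self, Nat.cast_one, mul_one]
  rw [add_comm]
  congr 1
  refine Finset.sum_congr rfl fun j _ => ?_
  rw [show p - 1 - j.1 = p - (j.1 + 1) by omega]
  ring

theorem genericRootSet_isOpen_and_proj (m p : ℕ) (hp : 1 ≤ p)
    (Ω : Set (Fin (m + 1) → ℂ)) (hΩ : IsOpen Ω) :
    IsOpen (genericRootSet m p Ω) ∧ Prod.fst '' genericRootSet m p Ω = Ω := by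
  constructor
  · rw [isOpen_iff_mem_nhds]
    rintro ⟨z, v⟩ ⟨hz, hv⟩
    have hA : ∀ᶠ x : (Fin (m + 1) → ℂ) × (Fin p → ℂ) in nhds (z, v), x.1 ∈ Ω :=
      continuous_fst.continuousAt.eventually (hΩ.mem_nhds hz)
    have hB : ∀ᶠ x : (Fin (m + 1) → ℂ) × (Fin p → ℂ) in nhds (z, v),
        1 + ∑ j, ‖x.2 j‖ < 2 + ∑ j, ‖v j‖ := by
      have hc : Continuous fun x : (Fin (m + 1) → ℂ) × (Fin p → ℂ) => 1 + ∑ j, ‖x.2 j‖ := by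
        fun_prop
      refine hc.continuousAt.eventually (gt_mem_nhds ?_)
      simp only
      linarith
    have hC : ∀ᶠ x : (Fin (m + 1) → ℂ) × (Fin p → ℂ) in nhds (z, v),
        ∀ ξ ∈ Metric.closedBall (0 : ℂ) (2 + ∑ j, ‖v j‖),
          ξ ^ p + ∑ j : Fin p, x.2 j * ξ ^ (p - (j.1 + 1)) ≠ 0 ∨
            Function.update x.1 (Fin.last m) ξ ∈ Ω := by
      refine (isCompact_closedBall _ _).eventually_forall_of_forall_eventually fun ξ _ => ?_
      have ho : IsOpen {y : ((Fin (m + 1) → ℂ) × (Fin p → ℂ)) × ℂ |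
          y.2 ^ p + ∑ j : Fin p, y.1.2 j * y.2 ^ (p - (j.1 + 1)) ≠ 0 ∨
            Function.update y.1.1 (Fin.last m) y.2 ∈ Ω} := by
        refine IsOpen.union ?_ ?_
        · exact isOpen_ne_fun (by fun_prop) continuous_const
        · exact hΩ.preimage ((continuous_fst.comp continuous_fst).update _ continuous_snd)
      refine ho.mem_nhds ?_
      by_cases h : ξ ^ p + ∑ j : Fin p, v j * ξ ^ (p - (j.1 + 1)) = 0
      · exact Or.inr (hv ξ h)
      · exact Or.inl h
    filter_upwards [hA, hB, hC] with x h1 h2 h3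
    refine ⟨h1, fun ξ hξ => ?_⟩
    have hb := root_bound_aux p hp x.2 ξ hξ
    exact (h3 ξ (by rw [mem_closedBall_zero_iff]; linarith)).resolve_left (fun h => h hξ)
  · ext z
    constructor
    · rintro ⟨x, hx, rfl⟩
      exact hx.1
    · intro hz
      refine ⟨(z, fun j => (-(z (Fin.last m))) ^ (p - (p - (j.1 + 1))) *
        (p.choose (p - (j.1 + 1)) : ℂ)), ⟨hz, fun ξ hξ => ?_⟩, rfl⟩
      simp only at hξ ⊢
      rw [pow_expand_aux] at hξ
      have : ξ = z (Fin.last m) := sub_eq_zero.mp (pow_eq_zero_iff (by omega) |>.mp hξ)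
      rw [this, Function.update_eq_self]
      exact hz
end

section
/- Let Ω be a nonempty set and let A be an ℝ-subalgebra of the ring of all functions Ω → ℝ (with pointwise operations) satisfying: (i) every f ∈ A with f(x) ≠ 0 for all x ∈ Ω is invertible in A; (ii) there is no infinite strictly decreasing sequence Z(f₁) ⊋ Z(f₂) ⊋ ⋯ of zero sets of elements of A, where Z(f) := {x ∈ Ω : f(x) = 0}. Then for every maximal ideal m of A there exists a point x ∈ Ω such that m = {f ∈ A : f(x) = 0}. -/
/-- abstraction of Proposition 2.6 of the paper.
Let `Ω` be a nonempty set and `A` an `ℝ`-subalgebra of the functions `Ω → ℝ` such that: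
(i) every nowhere vanishing element of `A` is invertible in `A`; (ii) there is no infinite
strictly decreasing sequence of zero sets of elements of `A`.  Then every maximal ideal of
`A` is the ideal of functions vanishing at some point `x ∈ Ω`. -/
theorem maximal_ideal_is_point_ideal (Ω : Type*) [Nonempty Ω]
    (A : Subalgebra ℝ (Ω → ℝ))
    (h_inv : ∀ (f : Ω → ℝ) (hf : f ∈ A), (∀ x : Ω, f x ≠ 0) → IsUnit (⟨f, hf⟩ : A))
    (h_dcc : ¬ ∃ f : ℕ → (Ω → ℝ), (∀ n, f n ∈ A) ∧
      ∀ n, {x : Ω | f (n + 1) x = 0} ⊂ {x : Ω | f n x = 0})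
    (m : Ideal A) (hm : m.IsMaximal) :
    ∃ x : Ω, ∀ f : A, f ∈ m ↔ (f : Ω → ℝ) x = 0 := by
  have hz : ∀ f : A, f ∈ m → ∃ x, (f : Ω → ℝ) x = 0 := by
    intro f hf
    by_contra! h
    exact hm.ne_top (Ideal.eq_top_of_isUnit_mem m hf (h_inv f.1 f.2 h))
  have key : ∃ x : Ω, ∀ f : A, f ∈ m → (f : Ω → ℝ) x = 0 := by
    by_contra! hc
    have step : ∀ f : m, ∃ g : m, {x : Ω | (g : A).1 x = 0} ⊂ {x : Ω | (f : A).1 x = 0} := by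
      rintro ⟨f, hf⟩
      obtain ⟨x, hx⟩ := hz f hf
      obtain ⟨g, hg, hgx⟩ := hc x
      refine ⟨⟨f * f + g * g, m.add_mem (m.mul_mem_left _ hf) (m.mul_mem_left _ hg)⟩, ?_⟩
      rw [Set.ssubset_iff_of_subset]
      · refine ⟨x, hx, ?_⟩
        intro h
        have h' : f.1 x * f.1 x + g.1 x * g.1 x = 0 := h
        rw [hx] at h'
        apply hgx
        nlinarith
      · intro y h
        have h' : f.1 y * f.1 y + g.1 y * g.1 y = 0 := h
        show f.1 y = 0
        nlinarith [mul_self_nonneg (f.1 y), mul_self_nonneg (g.1 y)]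
    choose s hs using step
    refine h_dcc ⟨fun n => ((s^[n] 0 : m) : A).1, fun n => ((s^[n] 0 : m) : A).2, fun n => ?_⟩
    simp only [Function.iterate_succ_apply']
    exact hs _
  obtain ⟨x, hx⟩ := key
  refine ⟨x, fun f => ⟨hx f, fun hf => ?_⟩⟩
  let φ : A →+* ℝ := (Pi.evalRingHom (fun _ : Ω => ℝ) x).comp A.val.toRingHom
  have h1 : m = RingHom.ker φ :=
    hm.eq_of_le (RingHom.ker_ne_top φ) (fun g hg => hx g hg)
  rw [h1]
  exact hf
end

section
/- Let n, p ≥ 1, let S ⊆ ℝⁿ, let U ⊆ ℝⁿ × ℝᵖ, and let f : ℝⁿ × ℝᵖ → ℝⁿ × ℝᵖ be a map such that the first component of f(x, y) equals x for every (x, y) ∈ U. Suppose that for every a ∈ S there is a radius r_a > 0 such that the open ball B((a, 0), r_a) (for the sup metric on the product ℝⁿ × ℝᵖ) is contained in U and the restriction of f to B((a, 0), r_a) is injective. Then the restriction of f to the union ⋃_{a ∈ S} B((a, 0), r_a) is injective. -/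
/-- injectivity gluing, second assertion of Lemma 5.3 of the paper.
Let `S ⊆ ℝⁿ`, `U ⊆ ℝⁿ × ℝᵖ`, and let `f : ℝⁿ × ℝᵖ → ℝⁿ × ℝᵖ` fix the first component
on `U`.  If for every `a ∈ S` there is `r a > 0` such that the ball `B((a,0), r a)` (sup
metric) is contained in `U` and `f` is injective on it, then `f` is injective on
`⋃_{a ∈ S} B((a,0), r a)`. -/
theorem injOn_union_of_injOn_balls (n p : ℕ) (hn : 1 ≤ n) (hp : 1 ≤ p)
    (S : Set (Fin n → ℝ)) (U : Set ((Fin n → ℝ) × (Fin p → ℝ)))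
    (f : (Fin n → ℝ) × (Fin p → ℝ) → (Fin n → ℝ) × (Fin p → ℝ))
    (hf_fst : ∀ z ∈ U, (f z).1 = z.1)
    (r : (Fin n → ℝ) → ℝ)
    (hr_pos : ∀ a ∈ S, 0 < r a)
    (hr_sub : ∀ a ∈ S, Metric.ball ((a, 0) : (Fin n → ℝ) × (Fin p → ℝ)) (r a) ⊆ U)
    (hr_inj : ∀ a ∈ S, Set.InjOn f (Metric.ball ((a, 0) : (Fin n → ℝ) × (Fin p → ℝ)) (r a))) :
    Set.InjOn f (⋃ a ∈ S, Metric.ball ((a, 0) : (Fin n → ℝ) × (Fin p → ℝ)) (r a)) := by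
  intro z hz w hw h
  simp only [Set.mem_iUnion] at hz hw
  obtain ⟨a, ha, hza⟩ := hz
  obtain ⟨b, hb, hwb⟩ := hw
  have hx : z.1 = w.1 := by
    rw [← hf_fst z (hr_sub a ha hza), ← hf_fst w (hr_sub b hb hwb), h]
  have hza2 := hza
  have hwb2 := hwb
  rw [Metric.mem_ball, Prod.dist_eq, max_lt_iff] at hza2 hwb2
  rcases le_total (r a) (r b) with hab | hab
  · refine hr_inj b hb ?_ hwb h
    rw [Metric.mem_ball, Prod.dist_eq, max_lt_iff]
    exact ⟨by rw [hx]; exact hwb2.1, hza2.2.trans_le hab⟩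
  · refine hr_inj a ha hza ?_ h
    rw [Metric.mem_ball, Prod.dist_eq, max_lt_iff]
    exact ⟨by rw [← hx]; exact hza2.1, hwb2.2.trans_le hab⟩
end

section
/- Let n ≥ 0 and p ≥ 1. Let σ : ℂᵖ → ℂᵖ be the map σ(v) = (−σ₁(v), σ₂(v), …, (−1)^p σ_p(v)), where σ_l is the l-th elementary symmetric polynomial in v₁, …, v_p, and let ψ : ℂⁿ × ℂᵖ → ℂⁿ × ℂᵖ be defined by ψ(z, v) = (z, σ(v)). Let V ⊆ ℂⁿ × ℂᵖ be open and set U := ψ⁻¹(V). If F : U → ℂ is analytic on U and symmetric, i.e. F(z, v_{α(1)}, …, v_{α(p)}) = F(z, v₁, …, v_p) for every permutation α of {1, …, p} and every (z, v) ∈ U, then there exists a function G : ℂⁿ × ℂᵖ → ℂ, analytic on V, such that F = G ∘ ψ on U. -/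
/-- The `l`-th elementary symmetric function `σ_l(v₁, …, v_p)`. -/
noncomputable def elemSymm (p l : ℕ) (v : Fin p → ℂ) : ℂ :=
  ∑ s ∈ Finset.univ.powersetCard l, ∏ i ∈ s, v i

/-- The map `ψ : ℂⁿ × ℂᵖ → ℂⁿ × ℂᵖ`, `ψ(z, v) = (z, σ(v))` where
`σ(v) = (−σ₁(v), σ₂(v), …, (−1)^p σ_p(v))`; `σ(v)` is the tuple of coefficients of the
monic polynomial `∏_{j=1}^p (X − v_j)`.  Here the `j`-th coordinate (`j : Fin p`)
is `(−1)^{j+1} σ_{j+1}(v)`. -/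
noncomputable def newtonMap (n p : ℕ) :
    ((Fin n → ℂ) × (Fin p → ℂ)) → ((Fin n → ℂ) × (Fin p → ℂ)) :=
  fun zv => (zv.1, fun j => (-1 : ℂ) ^ (j.1 + 1) * elemSymm p (j.1 + 1) zv.2)


lemma cauchyL1 (a : ℂ) (r : ℝ) (hr : 0 < r) :
    ∃ L : C(Circle, ℂ) →L[ℂ] ℂ, ∀ (f : ℂ → ℂ) (x : ℂ),
      DifferentiableOn ℂ f (Metric.closedBall a r) → ‖x - a‖ ≠ r →
      ∀ g : C(Circle, ℂ), (∀ u, g u = f (a + r * u) * (a + r * u - x)⁻¹) →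
        L g = if ‖x - a‖ < r then f x else 0 := by
  have hint : ∀ g : C(Circle, ℂ), IntervalIntegrable
      (fun θ : ℝ => deriv (circleMap a r) θ * g (Circle.exp θ)) MeasureTheory.volume 0 (2 * Real.pi) := by
    intro g
    apply Continuous.intervalIntegrable
    simp only [deriv_circleMap]
    fun_prop
  let L0 : C(Circle, ℂ) →ₗ[ℂ] ℂ :=
    { toFun := fun g => (2 * Real.pi * Complex.I)⁻¹ *
        ∫ θ in (0:ℝ)..(2 * Real.pi), deriv (circleMap a r) θ * g (Circle.exp θ)
      map_add' := by
        intro g h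
        rw [← mul_add, ← intervalIntegral.integral_add (hint g) (hint h)]
        simp [mul_add]
      map_smul' := by
        intro c g
        simp only [RingHom.id_apply, smul_eq_mul, ContinuousMap.smul_apply]
        rw [mul_left_comm, ← intervalIntegral.integral_const_mul c]
        congr 2
        funext θ
        ring }
  refine ⟨L0.mkContinuous (‖(2 * Real.pi * Complex.I)⁻¹‖ * (|r| * |2 * Real.pi - 0|)) ?_, ?_⟩
  · intro g
    change ‖(2 * Real.pi * Complex.I)⁻¹ * _‖ ≤ _
    rw [norm_mul, mul_assoc ‖_‖]
    refine mul_le_mul_of_nonneg_left ?_ (norm_nonneg _)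
    have e : |r| * |2 * Real.pi - 0| * ‖g‖ = (|r| * ‖g‖) * |2 * Real.pi - 0| := by ring
    rw [e]
    refine intervalIntegral.norm_integral_le_of_norm_le_const ?_
    intro θ _
    rw [norm_mul]
    gcongr
    · simp [deriv_circleMap]
    · exact g.norm_coe_le_norm _
  · intro f x hf hx g hg
    have key : L0 g = (2 * Real.pi * Complex.I)⁻¹ * ∮ z in C(a, r), (z - x)⁻¹ • f z := by
      change (2 * Real.pi * Complex.I)⁻¹ * _ = _
      rw [circleIntegral]
      congr 1
      apply intervalIntegral.integral_congr
      intro θ _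
      simp only [hg, smul_eq_mul]
      have : a + r * (Circle.exp θ : ℂ) = circleMap a r θ := by simp [circleMap]
      rw [this]; ring
    change L0 g = _
    rw [key]
    split_ifs with h
    · rw [hf.circleIntegral_sub_inv_smul (by simpa [dist_eq_norm] using h)]
      simp only [smul_eq_mul]
      field_simp [Real.pi_ne_zero]
    · rw [DiffContOnCl.circleIntegral_eq_zero hr.le, mul_zero]
      apply DifferentiableOn.diffContOnCl_ball (U := Metric.closedBall a r) _ le_rfl
      intro z hz
      have hzx : z - x ≠ 0 := by
        rintro h0
        rw [sub_eq_zero] at h0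
        subst h0
        rw [Metric.mem_closedBall, dist_eq_norm] at hz
        exact h (lt_of_le_of_ne hz hx)
      exact (((differentiableAt_id.sub_const x).inv hzx).differentiableWithinAt).smul (hf z hz)

lemma cauchyLd (r : ℝ) (hr : 0 < r) (d : ℕ) : ∀ (a : Fin d → ℂ),
    ∃ L : C(Fin d → Circle, ℂ) →L[ℂ] ℂ, ∀ (f : (Fin d → ℂ) → ℂ) (x : Fin d → ℂ),
      (∀ y, (∀ i, ‖y i - a i‖ ≤ r) → DifferentiableAt ℂ f y) → (∀ i, ‖x i - a i‖ ≠ r) →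
      ∀ g : C(Fin d → Circle, ℂ),
        (∀ u, g u = f (fun i => a i + r * u i) * ∏ i, (a i + r * u i - x i)⁻¹) →
        L g = if ∀ i, ‖x i - a i‖ < r then f x else 0 := by
  induction d with
  | zero =>
    intro a
    refine ⟨ContinuousMap.evalCLM ℂ (fun i => i.elim0), ?_⟩
    intro f x _ _ g hg
    have : ∀ i : Fin 0, ‖x i - a i‖ < r := fun i => i.elim0
    rw [if_pos this]
    change g _ = _
    rw [hg]
    simp
    congr 1
    exact Subsingleton.elim _ _
  | succ d ih =>
    intro a
    obtain ⟨L1, h1⟩ := cauchyL1 (a 0) r hr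
    obtain ⟨L2, h2⟩ := ih (fun i => a i.succ)
    let K : C(Circle × (Fin d → Circle), Fin (d+1) → Circle) :=
      ⟨fun q => Fin.cons q.1 q.2, Continuous.finCons continuous_fst continuous_snd⟩
    let Cu : C(Fin (d+1) → Circle, ℂ) →L[ℂ] C(Circle, C(Fin d → Circle, ℂ)) :=
      { toFun := fun g => (g.comp K).curry
        map_add' := fun _ _ => rfl
        map_smul' := fun _ _ => rfl
        cont := ContinuousMap.continuous_curry.comp (ContinuousMap.continuous_precomp K) }
    refine ⟨L1 ∘L (L2.compLeftContinuous ℂ Circle) ∘L Cu, ?_⟩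
    intro f x hf hx g hg
    change L1 (L2.compLeftContinuous ℂ Circle (Cu g)) = _
    let fs : ℂ → ℂ := fun s : ℂ => if ∀ i : Fin d, ‖x i.succ - a i.succ‖ < r then
          f (Fin.cons s (fun i => x i.succ)) else 0
    have hkey : ∀ u : Circle, (L2.compLeftContinuous ℂ Circle (Cu g)) u =
        fs (a 0 + r * u) * (a 0 + r * u - x 0)⁻¹ := by
      intro u
      change L2 (Cu g u) = _
      rw [h2 (fun y => f (Fin.cons (a 0 + r * u) y) * (a 0 + r * u - x 0)⁻¹) (fun i => x i.succ)]
      · simp only [fs, ite_mul, zero_mul]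
      · intro y hy
        apply DifferentiableAt.mul_const
        have hc : DifferentiableAt ℂ (fun y : Fin d → ℂ =>
            (Fin.cons (a 0 + r * u) y : Fin (d+1) → ℂ)) y := by
          rw [differentiableAt_pi]
          intro i
          refine Fin.cases ?_ (fun i => ?_) i
          · simp
          · simp only [Fin.cons_succ]; fun_prop
        refine DifferentiableAt.comp (f := fun y : Fin d → ℂ =>
            (Fin.cons (a 0 + r * u) y : Fin (d+1) → ℂ)) y (hf _ ?_) hc
        intro i
        refine Fin.cases ?_ (fun i => ?_) i
        · simp [abs_of_pos hr, Circle.norm_coe]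
        · simpa using hy i
      · exact fun i => hx _
      · intro w
        change g (Fin.cons u w) = _
        rw [hg, Fin.prod_univ_succ]
        simp only [Fin.cons_zero, Fin.cons_succ]
        have : (fun i => a i + r * ((Fin.cons u w : Fin (d+1) → Circle) i : ℂ)) =
            (Fin.cons (a 0 + r * u) (fun i => a i.succ + r * (w i : ℂ)) : Fin (d+1) → ℂ) := by
          funext i
          refine Fin.cases ?_ (fun i => ?_) i <;> simp
        rw [this]; ring
    rw [h1 fs (x 0) ?_ (hx 0) _ hkey]
    · simp only [fs, Fin.forall_fin_succ (P := fun i => ‖x i - a i‖ < r)]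
      have : (Fin.cons (x 0) fun i : Fin d => x i.succ) = x := Fin.cons_self_tail x
      simp only [this]
      by_cases h0 : ‖x 0 - a 0‖ < r
      · rw [if_pos h0]
        by_cases hi : ∀ i : Fin d, ‖x i.succ - a i.succ‖ < r
        · rw [if_pos hi, if_pos ⟨h0, hi⟩]
        · rw [if_neg hi, if_neg (fun h => hi h.2)]
      · rw [if_neg h0, if_neg (fun h => h0 h.1)]
    · intro s hs
      apply DifferentiableAt.differentiableWithinAt
      by_cases hin : ∀ i : Fin d, ‖x i.succ - a i.succ‖ < r
      · simp only [fs, if_pos hin]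
        have hc : DifferentiableAt ℂ (fun s : ℂ =>
            (Fin.cons s (fun i => x i.succ) : Fin (d+1) → ℂ)) s := by
          rw [differentiableAt_pi]
          intro i
          refine Fin.cases ?_ (fun i => ?_) i
          · simp
          · simp
        refine DifferentiableAt.comp (f := fun s : ℂ =>
            (Fin.cons s (fun i => x i.succ) : Fin (d+1) → ℂ)) s (hf _ ?_) hc
        intro i
        refine Fin.cases ?_ (fun i => ?_) i
        · simpa [dist_eq_norm] using hs
        · simpa using (hin i).le
      · simp only [fs, if_neg hin]
        exact differentiableAt_const _

noncomputable def sig (p : ℕ) (v : Fin p → ℂ) : Fin p → ℂ :=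
  fun j => (-1 : ℂ) ^ (j.1 + 1) * elemSymm p (j.1 + 1) v

open Polynomial in
noncomputable def mpoly (p : ℕ) (c : Fin p → ℂ) : ℂ[X] :=
  X ^ p + ∑ j : Fin p, C (c j) * X ^ (p - 1 - j.1)

open Polynomial in
lemma prod_eq_mpoly (p : ℕ) (v : Fin p → ℂ) :
    ((Finset.univ.val.map v).map fun t => X - C t).prod = mpoly p (sig p v) := by
  rw [Multiset.prod_X_sub_X_eq_sum_esymm]
  simp only [Multiset.card_map, Finset.card_val, Finset.card_univ, Fintype.card_fin]
  rw [Finset.sum_range_succ', Finset.sum_range, add_comm, mpoly]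
  congr 1
  · rw [Finset.esymm_map_val]; simp
  · apply Finset.sum_congr rfl
    intro j _
    rw [Finset.esymm_map_val, sig, elemSymm]
    have : p - (j.1 + 1) = p - 1 - j.1 := by omega
    rw [this]
    simp [mul_assoc]

open Polynomial in
lemma mpoly_deg (p : ℕ) (c : Fin p → ℂ) :
    (∑ j : Fin p, C (c j) * X ^ (p - 1 - j.1) : ℂ[X]).degree < p := by
  refine lt_of_le_of_lt (Polynomial.degree_sum_le _ _) ?_
  rw [Finset.sup_lt_iff (WithBot.bot_lt_coe _)]
  intro j _
  refine lt_of_le_of_lt (Polynomial.degree_C_mul_X_pow_le _ _) ?_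
  have := j.2
  exact_mod_cast (by omega : p - 1 - j.1 < p)

open Polynomial in
lemma mpoly_coeff (p : ℕ) (c : Fin p → ℂ) (j : Fin p) :
    (mpoly p c).coeff (p - 1 - j.1) = c j := by
  have := j.2
  rw [mpoly, coeff_add, coeff_X_pow, if_neg (by omega), zero_add, finsetSum_coeff,
    Finset.sum_eq_single j]
  · simp
  · intro i _ hij
    have := i.2
    have h3 : i.1 ≠ j.1 := fun h => hij (Fin.ext h)
    rw [coeff_C_mul, coeff_X_pow, if_neg (by omega), mul_zero]
  · simp

lemma mpoly_inj (p : ℕ) (c c' : Fin p → ℂ) (h : mpoly p c = mpoly p c') : c = c' := by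
  funext j
  rw [← mpoly_coeff p c j, h, mpoly_coeff]

lemma sig_surj (p : ℕ) (c : Fin p → ℂ) : ∃ v, sig p v = c := by
  have hm : (mpoly p c).Monic := Polynomial.monic_X_pow_add (mpoly_deg p c)
  have hd : (mpoly p c).natDegree = p := by
    rw [mpoly, Polynomial.natDegree_add_eq_left_of_degree_lt]
    · simp
    · simpa using mpoly_deg p c
  have hs : (mpoly p c).Splits := IsAlgClosed.splits _
  have hcard : (mpoly p c).roots.card = p := by
    rw [Polynomial.splits_iff_card_roots.1 hs, hd]
  have hv : ∀ (s : Multiset ℂ), s.card = p → ∃ v : Fin p → ℂ, Finset.univ.val.map v = s := by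
    intro s
    induction s using Quotient.inductionOn with
    | h l =>
      intro hl
      have hl' : l.length = p := hl
      subst hl'
      exact ⟨l.get, by rw [Fin.univ_val_map, List.ofFn_get]; rfl⟩
  obtain ⟨v, hv⟩ := hv _ hcard
  refine ⟨v, mpoly_inj p _ _ ?_⟩
  rw [← prod_eq_mpoly, hv]
  have := Polynomial.C_leadingCoeff_mul_prod_multiset_X_sub_C
    (Polynomial.splits_iff_card_roots.1 hs)
  rw [hm.leadingCoeff] at this
  simpa using this

lemma sig_fiber (p : ℕ) (v w : Fin p → ℂ) (h : sig p v = sig p w) :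
    ∃ α : Equiv.Perm (Fin p), w ∘ α = v := by
  have h1 : (Finset.univ.val.map v) = (Finset.univ.val.map w) := by
    rw [← Polynomial.roots_multiset_prod_X_sub_C (Finset.univ.val.map v), prod_eq_mpoly, h,
      ← prod_eq_mpoly, Polynomial.roots_multiset_prod_X_sub_C]
  have h2 : ∀ c, Nonempty ({ a // v a = c } ≃ { b // w b = c }) := by
    intro c
    rw [← Fintype.card_eq]
    have h3 := congrArg (Multiset.count c) h1
    rw [Multiset.count_map, Multiset.count_map] at h3
    rw [Fintype.card_subtype, Fintype.card_subtype]
    simpa [Finset.card, eq_comm] using h3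
  refine ⟨Equiv.ofFiberEquiv fun c => (h2 c).some, ?_⟩
  funext i
  exact Equiv.ofFiberEquiv_map _ i

lemma elemSymm_perm (p l : ℕ) (v : Fin p → ℂ) (α : Equiv.Perm (Fin p)) :
    elemSymm p l (v ∘ α) = elemSymm p l v := by
  unfold elemSymm
  rw [← Finset.esymm_map_val, ← Finset.esymm_map_val, ← Multiset.map_map,
    Multiset.map_univ_val_equiv]

lemma sig_perm (p : ℕ) (v : Fin p → ℂ) (α : Equiv.Perm (Fin p)) :
    sig p (v ∘ α) = sig p v := by
  funext j
  rw [sig, sig, elemSymm_perm]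

lemma sig_bound (p : ℕ) (v : Fin p → ℂ) (M : ℝ) (hM : ‖sig p v‖ ≤ M) (i : Fin p) :
    ‖v i‖ ≤ 1 + p * M := by
  have hM0 : 0 ≤ M := (norm_nonneg _).trans hM
  have h0 : (mpoly p (sig p v)).eval (v i) = 0 := by
    rw [← prod_eq_mpoly, Polynomial.eval_multiset_prod]
    apply Multiset.prod_eq_zero
    simp only [Multiset.map_map, Multiset.mem_map]
    exact ⟨i, by simp, by simp⟩
  have h1 : (v i) ^ p = - ∑ j : Fin p, sig p v j * (v i) ^ (p - 1 - j.1) := by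
    rw [mpoly, Polynomial.eval_add, Polynomial.eval_finsetSum] at h0
    simp only [Polynomial.eval_mul, Polynomial.eval_pow, Polynomial.eval_X, Polynomial.eval_C] at h0
    exact eq_neg_of_add_eq_zero_left h0
  by_contra! hc
  have hx1 : 1 ≤ ‖v i‖ := by
    have : 0 ≤ p * M := by positivity
    linarith
  have h2 : ‖v i‖ ^ p ≤ p * M * ‖v i‖ ^ (p - 1) := by
    rw [← norm_pow, h1, norm_neg]
    refine (norm_sum_le _ _).trans ?_
    have : ∀ j ∈ (Finset.univ : Finset (Fin p)),
        ‖sig p v j * v i ^ (p - 1 - j.1)‖ ≤ M * ‖v i‖ ^ (p - 1) := by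
      intro j _
      rw [norm_mul, norm_pow]
      exact mul_le_mul ((norm_le_pi_norm _ j).trans hM)
        (pow_le_pow_right₀ hx1 (by omega)) (by positivity) hM0
    refine (Finset.sum_le_sum this).trans ?_
    simp [mul_assoc]
  have hp : p = (p - 1) + 1 := by have := i.2; omega
  have h3 : ‖v i‖ ^ p = ‖v i‖ * ‖v i‖ ^ (p - 1) := by
    conv_lhs => rw [hp, pow_succ]
    ring
  rw [h3] at h2
  have := le_of_mul_le_mul_right h2 (by positivity)
  linarith

lemma sig_cont (p : ℕ) : Continuous (sig p) := by
  unfold sig elemSymm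
  fun_prop

lemma sig_closed (p : ℕ) : IsClosedMap (sig p) := by
  have : IsProperMap (sig p) := by
    refine isProperMap_iff_isCompact_preimage.mpr ⟨sig_cont p, fun {K} hK ↦ ?_⟩
    obtain ⟨M, hM⟩ := hK.isBounded.exists_norm_le
    refine Metric.isCompact_of_isClosed_isBounded (hK.isClosed.preimage (sig_cont p)) ?_
    rw [isBounded_iff_forall_norm_le]
    refine ⟨1 + p * |M|, fun v hv => ?_⟩
    rw [pi_norm_le_iff_of_nonneg (by positivity)]
    exact fun i => sig_bound p v _ ((hM _ hv).trans (le_abs_self M)) i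
  exact this.isClosedMap

/-- continuity of roots -/
lemma sig_near (p : ℕ) (v0 : Fin p → ℂ) (r : ℝ) (hr : 0 < r) :
    ∀ᶠ c in nhds (sig p v0), ∃ v, sig p v = c ∧ ∀ i, ‖v i - v0 i‖ < r := by
  let S : Set (Fin p → ℂ) := ⋂ α : Equiv.Perm (Fin p), {v | v ∘ α ∈ Metric.ball v0 r}ᶜ
  have hS : IsClosed S := by
    refine isClosed_iInter fun α => ?_
    rw [isClosed_compl_iff]
    refine Metric.isOpen_ball.preimage (f := fun v : Fin p → ℂ => v ∘ α) ?_
    fun_prop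
  have hc := sig_closed p S hS
  have hn : sig p v0 ∉ sig p '' S := by
    rintro ⟨v, hv, he⟩
    obtain ⟨α, hα⟩ := sig_fiber p v0 v he.symm
    have := Set.mem_iInter.1 hv α
    apply this
    simp [hα, hr]
  filter_upwards [hc.isOpen_compl.mem_nhds hn] with c hcc
  obtain ⟨v, rfl⟩ := sig_surj p c
  have : v ∉ S := fun h => hcc ⟨v, h, rfl⟩
  simp only [S, Set.mem_iInter, not_forall, Set.mem_compl_iff, not_not, Set.mem_ofPred_eq] at this
  obtain ⟨α, hα⟩ := this
  refine ⟨v ∘ α, sig_perm p v α, fun i => ?_⟩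
  rw [Metric.mem_ball, dist_pi_lt_iff hr] at hα
  simpa [dist_eq_norm] using hα i

lemma symm_poly {A : Type*} [CommRing A] [Algebra ℂ A] (p : ℕ) (N : MvPolynomial (Fin p) A)
    (hN : N.IsSymmetric) : ∃ Q : MvPolynomial (Fin p) A, ∀ v : Fin p → ℂ,
      MvPolynomial.aeval (fun j => algebraMap ℂ A (sig p v j)) Q =
        MvPolynomial.aeval (fun j => algebraMap ℂ A (v j)) N := by
  obtain ⟨Q0, hQ0⟩ := MvPolynomial.esymmAlgHom_surjective (σ := Fin p) A (n := p) (by simp) ⟨N, hN⟩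
  have h1 : MvPolynomial.aeval (fun i : Fin p => MvPolynomial.esymm (Fin p) A (i + 1)) Q0 = N := by
    rw [← MvPolynomial.esymmAlgHom_apply, hQ0]
  refine ⟨MvPolynomial.aeval (fun j : Fin p => (-1) ^ (j.1 + 1) * MvPolynomial.X j) Q0, fun v => ?_⟩
  rw [← h1, ← AlgHom.comp_apply, ← AlgHom.comp_apply]
  congr 1
  apply MvPolynomial.algHom_ext
  intro j
  simp only [AlgHom.comp_apply, MvPolynomial.aeval_X, map_mul, map_pow, map_neg, map_one]
  rw [MvPolynomial.aeval_esymm_eq_multiset_esymm, Finset.esymm_map_val, sig, elemSymm]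
  simp only [map_mul, map_pow, map_neg, map_one, map_sum, map_prod]
  rw [← mul_assoc, ← mul_pow]
  simp

lemma inverse_apply {T : Type*} [TopologicalSpace T] [CompactSpace T] (e : C(T, ℂ))
    (he : ∀ u, e u ≠ 0) (u : T) : (Ring.inverse e) u = (e u)⁻¹ := by
  have hu : IsUnit e := ContinuousMap.isUnit_iff_forall_ne_zero e |>.2 he
  have := congrArg (fun g : C(T, ℂ) => g u) (Ring.mul_inverse_cancel e hu)
  simp only [ContinuousMap.mul_apply, ContinuousMap.one_apply] at this
  exact eq_inv_of_mul_eq_one_right this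

lemma isSymm_N {A : Type*} [CommRing A] (p : ℕ) (W : Fin p → A) :
    (∑ β : Equiv.Perm (Fin p), ∏ i, ∏ j ∈ Finset.univ.erase (β i),
      (MvPolynomial.C (W i) - MvPolynomial.X j) : MvPolynomial (Fin p) A).IsSymmetric := by
  intro γ
  simp only [map_sum, map_prod, map_sub, MvPolynomial.rename_C, MvPolynomial.rename_X]
  refine Fintype.sum_equiv (Equiv.mulLeft γ) _ _ fun β => ?_
  refine Finset.prod_congr rfl fun i _ => ?_
  refine Finset.prod_equiv γ ?_ ?_
  · intro j
    simp
  · intro j _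
    rfl

lemma isSymm_D {A : Type*} [CommRing A] (p : ℕ) (W : Fin p → A) :
    (∏ i, ∏ j, (MvPolynomial.C (W i) - MvPolynomial.X j) :
      MvPolynomial (Fin p) A).IsSymmetric := by
  intro γ
  simp only [map_prod, map_sub, MvPolynomial.rename_C, MvPolynomial.rename_X]
  refine Finset.prod_congr rfl fun i _ => ?_
  exact Fintype.prod_equiv γ _ _ fun j => rfl

lemma perm_identity (p : ℕ) (w v : Fin p → ℂ) (h : ∀ i j, w i - v j ≠ 0) :
    (∑ β : Equiv.Perm (Fin p), ∏ i, ∏ j ∈ Finset.univ.erase (β i), (w i - v j)) *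
      (∏ i, ∏ j, (w i - v j))⁻¹ = ∑ β : Equiv.Perm (Fin p), ∏ i, (w i - v (β i))⁻¹ := by
  rw [Finset.sum_mul]
  refine Finset.sum_congr rfl fun β _ => ?_
  rw [← Finset.prod_inv_distrib, ← Finset.prod_mul_distrib]
  refine Finset.prod_congr rfl fun i _ => ?_
  rw [← Finset.mul_prod_erase Finset.univ (fun j => w i - v j) (Finset.mem_univ (β i)), mul_inv,
    mul_left_comm, mul_inv_cancel₀, mul_one]
  exact Finset.prod_ne_zero_iff.2 fun j _ => h i j

lemma local_factor (n p : ℕ) (U : Set ((Fin n → ℂ) × (Fin p → ℂ)))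
    (F : ((Fin n → ℂ) × (Fin p → ℂ)) → ℂ) (hF : ∀ u ∈ U, DifferentiableAt ℂ F u)
    (hF_sym : ∀ α : Equiv.Perm (Fin p), ∀ u ∈ U, F (u.1, u.2 ∘ α) = F u)
    (z0 : Fin n → ℂ) (v0 : Fin p → ℂ) (r : ℝ) (hr : 0 < r)
    (hU : ∀ z v, (∀ i, ‖z i - z0 i‖ ≤ r) → (∀ i, ‖v i - v0 i‖ ≤ r) → (z, v) ∈ U)
    (hsep : ∀ i j, v0 i ≠ v0 j → 2 * r < ‖v0 i - v0 j‖) :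
    ∃ G : ((Fin n → ℂ) × (Fin p → ℂ)) → ℂ, AnalyticAt ℂ G (z0, sig p v0) ∧
      ∀ z v, (∀ i, ‖z i - z0 i‖ < r) → (∀ i, ‖v i - v0 i‖ < r) → G (z, sig p v) = F (z, v) := by
  classical
  let a : Fin (n + p) → ℂ := Fin.append z0 v0
  obtain ⟨L, hL⟩ := cauchyLd r hr (n + p) a
  let f : (Fin (n + p) → ℂ) → ℂ := fun y => F (fun i => y (Fin.castAdd p i), fun j => y (Fin.natAdd n j))
  have hf : ∀ y, (∀ i, ‖y i - a i‖ ≤ r) → DifferentiableAt ℂ f y := by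
    intro y hy
    refine DifferentiableAt.comp (g := F) (f := fun y : Fin (n + p) → ℂ =>
      ((fun i => y (Fin.castAdd p i), fun j => y (Fin.natAdd n j)) :
        (Fin n → ℂ) × (Fin p → ℂ))) y (hF _ (hU _ _ ?_ ?_)) ?_
    · intro i
      simpa [a] using hy (Fin.castAdd p i)
    · intro i
      simpa [a] using hy (Fin.natAdd n i)
    · fun_prop
  let T := Fin (n + p) → Circle
  let W : Fin (n + p) → C(T, ℂ) := fun k => ⟨fun u => a k + r * (u k : ℂ), by fun_prop⟩
  have hWn : ∀ k u, ‖W k u - a k‖ = r := by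
    intro k u
    simp [W, abs_of_pos hr, Circle.norm_coe]
  let fT : C(T, ℂ) := ⟨fun u => f (fun k => W k u), by
    rw [continuous_iff_continuousAt]
    intro u
    refine ContinuousAt.comp (g := f) (f := fun u : T => fun k => W k u)
      (hf _ fun k => (hWn k u).le).continuousAt ?_
    exact Continuous.continuousAt (continuous_pi fun k => (W k).continuous)⟩
  obtain ⟨QN, hQN⟩ := symm_poly p _ (isSymm_N p fun i => W (Fin.natAdd n i))
  obtain ⟨QD, hQD⟩ := symm_poly p _ (isSymm_D p fun i => W (Fin.natAdd n i))
  let E : ((Fin n → ℂ) × (Fin p → ℂ)) → C(T, ℂ) := fun y =>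
    MvPolynomial.aeval (fun j => algebraMap ℂ C(T, ℂ) (y.2 j)) QD *
      ∏ i, (W (Fin.castAdd p i) - algebraMap ℂ C(T, ℂ) (y.1 i))
  let K : ((Fin n → ℂ) × (Fin p → ℂ)) → C(T, ℂ) := fun y =>
    fT * MvPolynomial.aeval (fun j => algebraMap ℂ C(T, ℂ) (y.2 j)) QN * Ring.inverse (E y)
  let M : ℂ := ∑ β : Equiv.Perm (Fin p), if ∀ i, v0 (β i) = v0 i then 1 else 0
  have hM : M ≠ 0 := by
    simp only [M, Finset.sum_boole]
    rw [Nat.cast_ne_zero, Finset.card_ne_zero]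
    exact ⟨1, by simp⟩
  -- nonvanishing facts
  have hne1 : ∀ v : Fin p → ℂ, (∀ i, ‖v i - v0 i‖ < r) → ∀ u i j, W (Fin.natAdd n i) u - v j ≠ 0 := by
    intro v hv u i j h0
    have h1 := hWn (Fin.natAdd n i) u
    rw [sub_eq_zero.1 h0] at h1
    simp only [a, Fin.append_right] at h1
    by_cases h : v0 j = v0 i
    · rw [← h] at h1
      exact (hv j).ne h1
    · have h2 := hsep j i h
      have h3 : ‖v0 j - v0 i‖ ≤ ‖v j - v0 j‖ + ‖v j - v0 i‖ := by
        have := norm_sub_le (v j - v0 i) (v j - v0 j)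
        rw [show (v j - v0 i) - (v j - v0 j) = v0 j - v0 i by ring] at this
        linarith
      have := hv j
      linarith
  have hne2 : ∀ z : Fin n → ℂ, (∀ i, ‖z i - z0 i‖ < r) → ∀ u i, W (Fin.castAdd p i) u - z i ≠ 0 := by
    intro z hz u i h0
    have h1 := hWn (Fin.castAdd p i) u
    rw [sub_eq_zero.1 h0] at h1
    simp only [a, Fin.append_left] at h1
    exact (hz i).ne h1
  have halg : ∀ (c : ℂ) (u : T), (algebraMap ℂ C(T, ℂ) c) u = c := fun c u => rfl
  have hEv : ∀ z v u, E (z, sig p v) u = (∏ i, ∏ j, (W (Fin.natAdd n i) u - v j)) *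
      ∏ i, (W (Fin.castAdd p i) u - z i) := by
    intro z v u
    simp only [E]
    rw [hQD]
    simp [ContinuousMap.prod_apply, halg]
  have hE0 : ∀ z v, (∀ i, ‖z i - z0 i‖ < r) → (∀ i, ‖v i - v0 i‖ < r) → ∀ u, E (z, sig p v) u ≠ 0 := by
    intro z v hz hv u
    rw [hEv]
    exact mul_ne_zero (Finset.prod_ne_zero_iff.2 fun i _ => Finset.prod_ne_zero_iff.2 fun j _ =>
      hne1 v hv u i j) (Finset.prod_ne_zero_iff.2 fun i _ => hne2 z hz u i)
  refine ⟨fun y => M⁻¹ * L (K y), ?_, ?_⟩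
  · have hb : ∀ (j : Fin p), AnalyticAt ℂ (fun y : (Fin n → ℂ) × (Fin p → ℂ) =>
        algebraMap ℂ C(T, ℂ) (y.2 j)) (z0, sig p v0) := fun j =>
      ((algebraMapCLM ℂ C(T, ℂ)) ∘L (ContinuousLinearMap.proj (R := ℂ) (φ := fun _ => ℂ) j) ∘L
        (ContinuousLinearMap.snd ℂ (Fin n → ℂ) (Fin p → ℂ))).analyticAt _
    have hz : ∀ (j : Fin n), AnalyticAt ℂ (fun y : (Fin n → ℂ) × (Fin p → ℂ) =>
        algebraMap ℂ C(T, ℂ) (y.1 j)) (z0, sig p v0) := fun j =>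
      ((algebraMapCLM ℂ C(T, ℂ)) ∘L (ContinuousLinearMap.proj (R := ℂ) (φ := fun _ => ℂ) j) ∘L
        (ContinuousLinearMap.fst ℂ (Fin n → ℂ) (Fin p → ℂ))).analyticAt _
    have hE : AnalyticAt ℂ E (z0, sig p v0) := by
      refine (AnalyticAt.aeval_mvPolynomial hb QD).mul ?_
      refine Finset.analyticAt_fun_prod _ fun i _ => ?_
      exact analyticAt_const.sub (hz i)
    have hunit : IsUnit (E (z0, sig p v0)) :=
      (ContinuousMap.isUnit_iff_forall_ne_zero _).2
        (hE0 z0 v0 (by simp [hr]) (by simp [hr]))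
    have hinv : AnalyticAt ℂ (fun y => Ring.inverse (E y)) (z0, sig p v0) := by
      obtain ⟨e, he⟩ := hunit
      have h1 := analyticAt_inverse (𝕜 := ℂ) e
      rw [he] at h1
      exact AnalyticAt.fun_comp h1 hE
    have hK : AnalyticAt ℂ K (z0, sig p v0) :=
      (analyticAt_const.mul (AnalyticAt.aeval_mvPolynomial hb QN)).mul hinv
    exact analyticAt_const.mul ((L.analyticAt _).fun_comp hK)
  · intro z v hz hv
    let x : Equiv.Perm (Fin p) → Fin (n + p) → ℂ := fun β => Fin.append z (v ∘ β)
    let H : Equiv.Perm (Fin p) → C(T, ℂ) := fun β => ∏ k, (W k - algebraMap ℂ C(T, ℂ) (x β k))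
    have hHv : ∀ β u, H β u = ∏ k, (W k u - x β k) := by
      intro β u
      simp [H, ContinuousMap.prod_apply, halg]
    have hx0 : ∀ β u k, W k u - x β k ≠ 0 := by
      intro β u k
      refine Fin.addCases (fun i => ?_) (fun i => ?_) k
      · simpa [x] using hne2 z hz u i
      · simpa [x] using hne1 v hv u i (β i)
    have hH0 : ∀ β u, H β u ≠ 0 := by
      intro β u
      rw [hHv]
      exact Finset.prod_ne_zero_iff.2 fun k _ => hx0 β u k
    let g : Equiv.Perm (Fin p) → C(T, ℂ) := fun β => fT * Ring.inverse (H β)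
    have hgv : ∀ β u, g β u = f (fun k => W k u) * ∏ k, (W k u - x β k)⁻¹ := by
      intro β u
      simp only [g, ContinuousMap.mul_apply]
      rw [inverse_apply _ (hH0 β), hHv, Finset.prod_inv_distrib]
      rfl
    have hK : K (z, sig p v) = ∑ β, g β := by
      ext u
      simp only [K, ContinuousMap.mul_apply, ContinuousMap.sum_apply]
      rw [inverse_apply _ (hE0 z v hz hv), hEv, hQN, mul_inv]
      have h1 := perm_identity p (fun i => W (Fin.natAdd n i) u) v (hne1 v hv u)
      have h2 : (MvPolynomial.aeval (fun j => algebraMap ℂ C(T, ℂ) (v j))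
          (∑ β : Equiv.Perm (Fin p), ∏ i, ∏ j ∈ Finset.univ.erase (β i),
          (MvPolynomial.C (W (Fin.natAdd n i)) - MvPolynomial.X j) :
            MvPolynomial (Fin p) C(T, ℂ))) u = ∑ β : Equiv.Perm (Fin p), ∏ i,
            ∏ j ∈ Finset.univ.erase (β i), (W (Fin.natAdd n i) u - v j) := by
        simp [ContinuousMap.prod_apply, ContinuousMap.sum_apply, halg]
      rw [h2, mul_assoc, ← mul_assoc (∑ β : Equiv.Perm (Fin p), _), h1, Finset.sum_mul,
        Finset.mul_sum]
      refine Finset.sum_congr rfl fun β _ => ?_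
      rw [hgv, Fin.prod_univ_add]
      simp only [x, Fin.append_left, Fin.append_right, Function.comp_apply]
      rw [← Finset.prod_inv_distrib, mul_comm (∏ i, (W (Fin.natAdd n i) u - v (β i))⁻¹)]
      rfl
    have hcase : ∀ (β : Equiv.Perm (Fin p)) i, (v0 (β i) = v0 i → ‖v (β i) - v0 i‖ < r) ∧
        (v0 (β i) ≠ v0 i → r < ‖v (β i) - v0 i‖) := by
      intro β i
      refine ⟨fun h => h ▸ hv (β i), fun h => ?_⟩
      have h2 := hsep (β i) i h
      have h3 : ‖v0 (β i) - v0 i‖ ≤ ‖v (β i) - v0 (β i)‖ + ‖v (β i) - v0 i‖ := by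
        have := norm_sub_le (v (β i) - v0 i) (v (β i) - v0 (β i))
        rw [show (v (β i) - v0 i) - (v (β i) - v0 (β i)) = v0 (β i) - v0 i by ring] at this
        linarith
      have := hv (β i)
      linarith
    have hLg : ∀ β, L (g β) = (if ∀ i, v0 (β i) = v0 i then 1 else 0) * F (z, v) := by
      intro β
      rw [hL f (x β) hf ?_ (g β) (hgv β)]
      · have hiff : (∀ k, ‖x β k - a k‖ < r) ↔ ∀ i, v0 (β i) = v0 i := by
          constructor
          · intro h i
            by_contra hc
            have h1 := h (Fin.natAdd n i)
            simp only [x, a, Fin.append_right, Function.comp_apply] at h1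
            exact absurd h1 (not_lt.2 ((hcase β i).2 hc).le)
          · intro h k
            refine Fin.addCases (fun i => ?_) (fun i => ?_) k
            · simpa [x, a] using hz i
            · simpa [x, a] using (hcase β i).1 (h i)
        have hfx : f (x β) = F (z, v) := by
          simp only [f, x, Fin.append_left, Fin.append_right]
          exact hF_sym β (z, v) (hU z v (fun i => (hz i).le) (fun i => (hv i).le))
        simp only [hiff, hfx, ite_mul, one_mul, zero_mul]
      · intro k
        refine Fin.addCases (fun i => ?_) (fun i => ?_) k
        · simpa [x, a] using (hz i).ne
        · simp only [x, a, Fin.append_right, Function.comp_apply]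
          by_cases h : v0 (β i) = v0 i
          · exact ((hcase β i).1 h).ne
          · exact ((hcase β i).2 h).ne'
    change M⁻¹ * L (K (z, sig p v)) = _
    rw [hK, map_sum, Finset.sum_congr rfl fun β _ => hLg β, ← Finset.sum_mul]
    change M⁻¹ * (M * _) = _
    rw [inv_mul_cancel_left₀ hM]

/-- holomorphic Newton theorem, Tougeron IX.6.5, used in Theorem 4.1.
Let `V ⊆ ℂⁿ × ℂᵖ` be open (`p ≥ 1`) and `U = ψ⁻¹(V)`.  If `F` is holomorphic on `U` and
symmetric in the variables `v₁, …, v_p`, then `F = G ∘ ψ` on `U` for some `G`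
holomorphic on `V`. -/
theorem symmetric_analytic_factors_through_newtonMap (n p : ℕ) (hp : 1 ≤ p)
    (V : Set ((Fin n → ℂ) × (Fin p → ℂ))) (hV : IsOpen V)
    (F : ((Fin n → ℂ) × (Fin p → ℂ)) → ℂ)
    (hF : AnalyticOnNhd ℂ F (newtonMap n p ⁻¹' V))
    (hF_sym : ∀ α : Equiv.Perm (Fin p), ∀ u ∈ newtonMap n p ⁻¹' V,
      F (u.1, u.2 ∘ α) = F u) :
    ∃ G : ((Fin n → ℂ) × (Fin p → ℂ)) → ℂ, AnalyticOnNhd ℂ G V ∧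
      ∀ u ∈ newtonMap n p ⁻¹' V, F u = G (newtonMap n p u) := by
  have hψ : ∀ u, newtonMap n p u = (u.1, sig p u.2) := fun u => rfl
  choose s hs using sig_surj p
  have hG : ∀ u ∈ newtonMap n p ⁻¹' V, F u = F (u.1, s (sig p u.2)) := by
    intro u hu
    obtain ⟨α, hα⟩ := sig_fiber p (s (sig p u.2)) u.2 (hs _)
    rw [← hα, hF_sym α u hu]
  refine ⟨fun y => F (y.1, s y.2), ?_, fun u hu => hG u hu⟩
  rintro ⟨z0, c0⟩ hb
  obtain ⟨v0, rfl⟩ := sig_surj p c0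
  have hcont : Continuous (newtonMap n p) :=
    continuous_fst.prodMk ((sig_cont p).comp continuous_snd)
  have hUo : IsOpen (newtonMap n p ⁻¹' V) := hV.preimage hcont
  obtain ⟨ε, hε, hball⟩ := Metric.isOpen_iff.1 hUo (z0, v0) hb
  have hr : ∀ᶠ r : ℝ in nhdsWithin 0 (Set.Ioi 0), 0 < r ∧ r < ε ∧
      ∀ i j, v0 i ≠ v0 j → 2 * r < ‖v0 i - v0 j‖ := by
    refine Filter.Eventually.and self_mem_nhdsWithin (Filter.Eventually.and ?_ ?_)
    · exact nhdsWithin_le_nhds (Iio_mem_nhds hε)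
    · rw [Filter.eventually_all]
      intro i
      rw [Filter.eventually_all]
      intro j
      rw [Filter.eventually_imp_distrib_left]
      intro hij
      have h1 : 0 < ‖v0 i - v0 j‖ / 2 := by
        have := norm_pos_iff.2 (sub_ne_zero.2 hij)
        linarith
      filter_upwards [nhdsWithin_le_nhds (Iio_mem_nhds h1)] with r hr
      have : r < ‖v0 i - v0 j‖ / 2 := hr
      linarith
  obtain ⟨r, hr0, hrε, hsep⟩ := hr.exists
  obtain ⟨G, hGa, hGe⟩ := local_factor n p (newtonMap n p ⁻¹' V) F
    (fun u hu => (hF u hu).differentiableAt) hF_sym z0 v0 r hr0 (by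
      intro z v hz hv
      apply hball
      rw [Metric.mem_ball, Prod.dist_eq]
      refine lt_of_le_of_lt (max_le ?_ ?_) hrε
      · exact (dist_pi_le_iff hr0.le).2 fun i => by simpa [dist_eq_norm] using hz i
      · exact (dist_pi_le_iff hr0.le).2 fun i => by simpa [dist_eq_norm] using hv i) hsep
  refine hGa.congr ?_
  have h1 : ∀ᶠ y : (Fin n → ℂ) × (Fin p → ℂ) in nhds (z0, sig p v0),
      ∃ v, sig p v = y.2 ∧ ∀ i, ‖v i - v0 i‖ < r :=
    (continuous_snd.tendsto (z0, sig p v0)).eventually (sig_near p v0 r hr0)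
  have h2 : ∀ᶠ y : (Fin n → ℂ) × (Fin p → ℂ) in nhds (z0, sig p v0), y.1 ∈ Metric.ball z0 r :=
    (continuous_fst.tendsto (z0, sig p v0)).eventually (Metric.ball_mem_nhds z0 hr0)
  filter_upwards [h1, h2, hV.mem_nhds hb] with y hy1 hy2 hyV
  obtain ⟨z, c⟩ := y
  obtain ⟨v, hv, hvr⟩ := hy1
  simp only at hv hy2
  subst hv
  rw [hGe z v ?_ hvr]
  · exact hG (z, v) hyV
  · intro i
    rw [Metric.mem_ball, dist_pi_lt_iff hr0] at hy2
    simpa [dist_eq_norm] using hy2 i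
end

section
/- Let n ≥ 1, p ≥ 1, let Ω ⊆ ℝⁿ be an open set, and let g : Ω → ℝ be real-analytic on Ω. Let Δ := {(x, t) ∈ Ω × ℝᵖ : t_j = (−1)^j · C(p, j) · x_n^j for j = 1, …, p}, where C(p, j) is the binomial coefficient, so that t is the tuple of coefficients of the polynomial (X − x_n)^p. Then there exist an open set W ⊆ Ω × ℝᵖ with Δ ⊆ W, a real-analytic function q on W, and real-analytic functions h₁, …, h_p on the image Π(W) of W under the map (x, t) ↦ ((x₁, …, x_{n−1}), t) ∈ ℝ^{n−1} × ℝᵖ, such that for every (x, t) ∈ W: g(x) = q(x, t) · (x_n^p + Σ_{j=1}^p t_j x_n^{p−j}) + Σ_{j=1}^p h_j((x₁, …, x_{n−1}), t) · x_n^{p−j}. -/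
/-- The projection `ℝⁿ × ℝᵖ → ℝ^{n-1} × ℝᵖ`, `(x, t) ↦ ((x₁, …, x_{n−1}), t)`,
for `n = m + 1`. -/
def dropLastProjR (m p : ℕ) :
    ((Fin (m + 1) → ℝ) × (Fin p → ℝ)) → ((Fin m → ℝ) × (Fin p → ℝ)) :=
  fun xt => (xt.1 ∘ Fin.castSucc, xt.2)

open scoped BoundedContinuousFunction Topology NNReal ENNReal

namespace GenDiv

theorem analyticAt_tsum {E F : Type*} [NormedAddCommGroup E] [NormedSpace ℝ E]
    [NormedAddCommGroup F] [NormedSpace ℝ F] [CompleteSpace F]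
    (f : ℕ → E → F) (P : ℕ → FormalMultilinearSeries ℝ E F) (x : E) (R : ℝ≥0) (hR : 0 < R)
    (hf : ∀ k, HasFPowerSeriesOnBall (f k) (P k) x R)
    (hs : Summable fun kn : ℕ × ℕ => ‖P kn.1 kn.2‖ * (R : ℝ) ^ kn.2) :
    AnalyticAt ℝ (fun y => ∑' k, f k y) x ∧ ∀ᶠ y in 𝓝 x, Summable fun k => f k y := by
  have hR' : (0 : ℝ) < R := by exact_mod_cast hR
  have hs' : Summable fun nk : ℕ × ℕ => ‖P nk.2 nk.1‖ * (R : ℝ) ^ nk.1 :=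
    (Equiv.prodComm ℕ ℕ).summable_iff.mpr hs
  have hn : ∀ n, Summable fun k => ‖P k n‖ := by
    intro n
    have := (hs'.prod_factor n).mul_right ((R : ℝ) ^ n)⁻¹
    refine this.congr fun k => ?_
    have : (R : ℝ) ^ n ≠ 0 := by positivity
    simp [this]
  have hn' : ∀ n, Summable fun k => P k n := fun n => (hn n).of_norm
  let Q : FormalMultilinearSeries ℝ E F := fun n => ∑' k, P k n
  have hQ : ∀ n, ‖Q n‖ ≤ ∑' k, ‖P k n‖ := fun n => norm_tsum_le_tsum_norm (hn n)
  have hrad : (R : ℝ≥0∞) ≤ Q.radius := by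
    apply FormalMultilinearSeries.le_radius_of_summable
    refine Summable.of_nonneg_of_le (fun n => by positivity) (fun n => ?_) hs'.prod
    have e : ∑' c : ℕ, ‖P c n‖ * (R : ℝ) ^ n = (∑' c : ℕ, ‖P c n‖) * (R : ℝ) ^ n := tsum_mul_right
    exact (mul_le_mul_of_nonneg_right (hQ n) (by positivity)).trans_eq e.symm
  have key : ∀ y ∈ Metric.eball (0 : E) R,
      Summable (fun k => f k (x + y)) ∧ HasSum (fun n => Q n fun _ => y) (∑' k, f k (x + y)) := by
    intro y hy
    have hy' : ‖y‖ ≤ R := by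
      have hy0 : ‖y‖ < R := by simpa using hy
      exact hy0.le
    have hsum : Summable fun kn : ℕ × ℕ => P kn.1 kn.2 fun _ => y := by
      refine Summable.of_norm_bounded hs fun kn => ?_
      refine ((P kn.1 kn.2).le_opNorm _).trans ?_
      simp only [Finset.prod_const, Finset.card_univ, Fintype.card_fin]
      gcongr
    have h1 : ∀ k, HasSum (fun n => P k n fun _ => y) (f k (x + y)) := fun k => (hf k).hasSum hy
    have h2 : HasSum (fun k => f k (x + y)) (∑' kn : ℕ × ℕ, P kn.1 kn.2 fun _ => y) :=
      hsum.hasSum.prod_fiberwise h1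
    have h3 : HasSum (fun n => Q n fun _ => y) (∑' kn : ℕ × ℕ, P kn.1 kn.2 fun _ => y) := by
      have h4 : HasSum (fun nk : ℕ × ℕ => P nk.2 nk.1 fun _ => y)
          (∑' kn : ℕ × ℕ, P kn.1 kn.2 fun _ => y) :=
        (Equiv.prodComm ℕ ℕ).hasSum_iff.mpr hsum.hasSum
      exact h4.prod_fiberwise fun n => ContinuousMultilinearMap.hasSum_eval (hn' n).hasSum _
    exact ⟨h2.summable, by rw [h2.tsum_eq]; exact h3⟩
  refine ⟨⟨Q, R, hrad, by exact_mod_cast hR, fun {y} hy => (key y hy).2⟩, ?_⟩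
  filter_upwards [Metric.eball_mem_nhds x (ε := (R : ℝ≥0∞)) (by exact_mod_cast hR)] with z hz
  have := (key (z - x) (by rw [Metric.mem_eball, edist_zero_right, ← edist_eq_enorm_sub]; exact hz)).1
  simpa using this

/-- Taylor coefficients in direction `e`. -/
noncomputable def tc {E : Type*} [NormedAddCommGroup E] [NormedSpace ℝ E] (g : E → ℝ) (e : E)
    (k : ℕ) (y : E) : ℝ := ((k.factorial : ℝ))⁻¹ * iteratedFDeriv ℝ k g y (fun _ => e)

theorem tc_analytic {E F : Type*} [NormedAddCommGroup E] [NormedSpace ℝ E]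
    [NormedAddCommGroup F] [NormedSpace ℝ F] [CompleteSpace F] (g : E → ℝ) (e : E) (he : ‖e‖ ≤ 1)
    (x : E) (hg : AnalyticAt ℝ g x) :
    ∃ ρ : ℝ, 0 < ρ ∧ (∀ᶠ yz : E × ℝ in 𝓝 (x, 0),
        HasSum (fun k => tc g e k yz.1 * yz.2 ^ k) (g (yz.1 + yz.2 • e))) ∧
      ∀ w : ℕ → F, (∀ k, ‖w k‖ ≤ ρ ^ k) →
        AnalyticAt ℝ (fun y => ∑' k, tc g e k y • w k) x ∧
        ∀ᶠ y in 𝓝 x, Summable fun k => tc g e k y • w k := by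
  obtain ⟨p, r, hp⟩ := hg
  obtain ⟨ρ, hρ, hρr⟩ : ∃ ρ : ℝ≥0, 0 < ρ ∧ (ρ : ℝ≥0∞) + ρ < r := by
    obtain ⟨a, ha, har⟩ := ENNReal.lt_iff_exists_nnreal_btwn.mp hp.r_pos
    refine ⟨a / 2, half_pos (by exact_mod_cast ha), ?_⟩
    rw [← ENNReal.coe_add, add_halves]
    exact har
  have hρp : (ρ : ℝ≥0∞) + ρ < p.radius := hρr.trans_le hp.r_le
  have hρr1 : (ρ : ℝ≥0∞) < r := lt_of_le_of_lt le_self_add hρr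
  have hco : ∀ v : E, ‖v‖₊ < ρ → ∀ k, tc g e k (x + v) = p.changeOrigin v k (fun _ => e) := by
    intro v hv k
    have h1 : (‖v‖₊ : ℝ≥0∞) < r := lt_trans (by exact_mod_cast hv) hρr1
    have := (hp.changeOrigin h1).factorial_smul e k
    rw [tc, ← this, nsmul_eq_mul, inv_mul_cancel_left₀ (by positivity)]
  have hball : ∀ᶠ y in 𝓝 x, ‖y - x‖₊ < ρ := by
    filter_upwards [Metric.ball_mem_nhds x (ε := (ρ : ℝ)) (by exact_mod_cast hρ)] with y hy
    have : ‖y - x‖ < ρ := by simpa [dist_eq_norm] using hy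
    exact_mod_cast this
  refine ⟨ρ, by exact_mod_cast hρ, ?_, ?_⟩
  · have hz : ∀ᶠ z : ℝ in 𝓝 0, ‖z‖₊ < ρ := by
      filter_upwards [Metric.ball_mem_nhds (0 : ℝ) (ε := (ρ : ℝ)) (by exact_mod_cast hρ)] with y hy
      have : ‖y‖ < ρ := by simpa using hy
      exact_mod_cast this
    rw [nhds_prod_eq]
    filter_upwards [hball.prod_mk hz] with ⟨y, z⟩ ⟨hy, hz⟩
    simp only at hy hz ⊢
    have h1 : (‖y - x‖₊ : ℝ≥0∞) < r := lt_trans (by exact_mod_cast hy) hρr1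
    have h2 := hp.changeOrigin h1
    have h3 : z • e ∈ Metric.eball (0 : E) (r - ‖y - x‖₊) := by
      have h4 : ‖z • e‖₊ < ρ := by
        refine lt_of_le_of_lt ?_ hz
        rw [nnnorm_smul]
        exact mul_le_of_le_one_right (by positivity) he
      rw [Metric.mem_eball, edist_zero_right, lt_tsub_iff_right, enorm_eq_nnnorm]
      refine lt_trans ?_ hρr
      have : ‖z • e‖₊ + ‖y - x‖₊ < ρ + ρ := add_lt_add h4 hy
      exact_mod_cast this
    have h5 := h2.hasSum h3
    rw [add_sub_cancel] at h5
    have hfun : (fun k => tc g e k y * z ^ k) = fun k => (p.changeOrigin (y - x) k) fun _ => z • e := by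
      funext k
      have := hco (y - x) hy k
      rw [add_sub_cancel] at this
      rw [this, ContinuousMultilinearMap.map_smul_univ]
      simp [mul_comm]
    rw [hfun]
    exact h5
  · intro w hw
    let Λ : (k : ℕ) → (E [×k]→L[ℝ] ℝ) →L[ℝ] F := fun k =>
      (ContinuousMultilinearMap.apply ℝ (fun _ : Fin k => E) ℝ (fun _ => e)).smulRight (w k)
    have hΛ : ∀ k, ‖Λ k‖ ≤ ρ ^ k := by
      intro k
      refine ContinuousLinearMap.opNorm_le_bound _ (by positivity) fun M => ?_
      simp only [Λ, ContinuousLinearMap.smulRight_apply, ContinuousMultilinearMap.apply_apply,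
        norm_smul]
      rw [mul_comm]
      gcongr
      · exact hw k
      · refine (M.le_opNorm _).trans ?_
        refine mul_le_of_le_one_right (norm_nonneg _) ?_
        exact Finset.prod_le_one (fun _ _ => norm_nonneg _) (fun _ _ => he)
    have hrad : 0 < p.radius := lt_of_le_of_lt (zero_le) hρp
    have := analyticAt_tsum (fun k y => Λ k (p.changeOrigin (y - x) k))
      (fun k => (Λ k).compFormalMultilinearSeries (p.changeOriginSeries k)) x ρ hρ ?_ ?_
    · obtain ⟨ha, hs⟩ := this
      have heq : ∀ᶠ y in 𝓝 x, ∀ k, Λ k (p.changeOrigin (y - x) k) = tc g e k y • w k := by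
        filter_upwards [hball] with y hy k
        have := hco (y - x) hy k
        rw [add_sub_cancel] at this
        simp [Λ, this]
      refine ⟨ha.congr ?_, ?_⟩
      · filter_upwards [heq] with y hy
        simp [hy]
      · filter_upwards [heq, hs] with y hy hy'
        simpa [hy] using hy'
    · intro k
      have h1 := (p.hasFPowerSeriesOnBall_changeOrigin k hrad).mono (r' := (ρ : ℝ≥0∞))
        (by exact_mod_cast hρ) (le_trans le_self_add hρp.le)
      have h2 := (Λ k).comp_hasFPowerSeriesOnBall h1
      have := h2.comp_sub x
      simpa [Function.comp_def] using this
    · have h1 := p.changeOriginSeries_summable_aux₁ hρp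
      have h2 : Summable fun kn : ℕ × ℕ => (∑' _ : { s : Finset (Fin (kn.1 + kn.2)) // s.card = kn.2 },
          ‖p (kn.1 + kn.2)‖₊) * ρ ^ kn.2 * ρ ^ kn.1 := by
        have h3 := (Equiv.sigmaAssoc (fun (k : ℕ) (l : ℕ) =>
          { s : Finset (Fin (k + l)) // s.card = l })).summable_iff.mpr h1
        have h4 := (NNReal.summable_sigma.1 h3).2
        have h5 := (Equiv.sigmaEquivProd ℕ ℕ).symm.summable_iff.mpr h4
        refine h5.congr fun kn => ?_
        rw [← NNReal.tsum_mul_right, ← NNReal.tsum_mul_right]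
        rfl
      have h2' := NNReal.summable_coe.mpr h2
      refine Summable.of_nonneg_of_le (fun n => by positivity) (fun kn => ?_) h2'
      push_cast
      have e1 : ‖(Λ kn.1).compFormalMultilinearSeries (p.changeOriginSeries kn.1) kn.2‖ ≤
          ρ ^ kn.1 * ‖p.changeOriginSeries kn.1 kn.2‖ :=
        ((Λ kn.1).norm_compContinuousMultilinearMap_le _).trans (by gcongr; exact hΛ _)
      have e2 := p.nnnorm_changeOriginSeries_le_tsum kn.1 kn.2
      have e3 : ‖p.changeOriginSeries kn.1 kn.2‖ ≤
        ((∑' _ : { s : Finset (Fin (kn.1 + kn.2)) // s.card = kn.2 }, ‖p (kn.1 + kn.2)‖₊ : ℝ≥0) : ℝ) := by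
        exact_mod_cast e2
      push_cast at e3
      calc _ ≤ ρ ^ kn.1 * ‖p.changeOriginSeries kn.1 kn.2‖ * ρ ^ kn.2 := by gcongr
        _ = ‖p.changeOriginSeries kn.1 kn.2‖ * ρ ^ kn.2 * ρ ^ kn.1 := by ring
        _ ≤ _ := by gcongr

theorem seqModel (ρ : ℝ) (hρ : 0 < ρ) :
    ∃ (S T : (ℕ →ᵇ ℝ) →L[ℝ] (ℕ →ᵇ ℝ)) (u : ℕ →ᵇ ℝ) (χ : (ℕ →ᵇ ℝ) →L[ℝ] ℝ),
      T * S = 1 ∧ T u = 0 ∧ χ ∘L S = 0 ∧ χ u = 1 ∧ ∀ k, ‖(S ^ k) u‖ ≤ ρ ^ k := by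
  let S0 : (ℕ →ᵇ ℝ) →ₗ[ℝ] (ℕ →ᵇ ℝ) :=
    { toFun := fun f => BoundedContinuousFunction.ofNormedAddCommGroupDiscrete
        (fun n => Nat.casesOn n (0 : ℝ) (fun n => f n)) ‖f‖
        (by rintro (_ | n)
            · simp
            · exact f.norm_coe_le_norm n)
      map_add' := by
        intro f g; ext (_ | n) <;> simp
      map_smul' := by
        intro c f; ext (_ | n) <;> simp }
  let T0 : (ℕ →ᵇ ℝ) →ₗ[ℝ] (ℕ →ᵇ ℝ) :=
    { toFun := fun f => BoundedContinuousFunction.ofNormedAddCommGroupDiscrete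
        (fun n => f (n + 1)) ‖f‖ (fun n => f.norm_coe_le_norm _)
      map_add' := by
        intro f g; ext n; simp
      map_smul' := by
        intro c f; ext n; simp }
  have hS0 : ∀ f, ‖S0 f‖ ≤ 1 * ‖f‖ := by
    intro f
    rw [one_mul]
    refine (BoundedContinuousFunction.norm_le (norm_nonneg _)).mpr ?_
    rintro (_ | n)
    · simp [S0]
    · exact f.norm_coe_le_norm n
  have hT0 : ∀ f, ‖T0 f‖ ≤ 1 * ‖f‖ := by
    intro f
    rw [one_mul]
    exact (BoundedContinuousFunction.norm_le (norm_nonneg _)).mpr fun n => f.norm_coe_le_norm _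
  let S1 := S0.mkContinuous 1 hS0
  let T1 := T0.mkContinuous 1 hT0
  let u : ℕ →ᵇ ℝ := BoundedContinuousFunction.ofNormedAddCommGroupDiscrete
        (fun n => if n = 0 then (1 : ℝ) else 0) 1 (by intro n; split_ifs <;> simp)
  refine ⟨ρ • S1, ρ⁻¹ • T1, u, BoundedContinuousFunction.evalCLM ℝ 0, ?_, ?_, ?_, ?_, ?_⟩
  · ext f n
    simp [S1, T1, S0, T0, hρ.ne']
  · ext n
    simp [T1, T0, u]
  · ext f
    simp [S1, S0]
  · simp [u]
  · have hu : ‖u‖ ≤ 1 := by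
      refine (BoundedContinuousFunction.norm_le zero_le_one).mpr fun n => ?_
      simp only [u, BoundedContinuousFunction.coe_ofNormedAddCommGroupDiscrete]
      split_ifs <;> simp
    intro k
    induction k with
    | zero => simpa using hu
    | succ k ih =>
      rw [pow_succ', pow_succ']
      have : ‖S1 (((ρ • S1) ^ k) u)‖ ≤ 1 * ‖((ρ • S1) ^ k) u‖ := hS0 _
      change ‖ρ • S1 (((ρ • S1) ^ k) u)‖ ≤ _
      rw [norm_smul, Real.norm_eq_abs, abs_of_pos hρ]
      gcongr
      linarith

open Polynomial in
theorem T_pow_S {F : Type*} [NormedAddCommGroup F] [NormedSpace ℝ F] (S T : F →L[ℝ] F) (hTS : T * S = 1) (p : ℕ) (v : F) :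
    (T ^ p) ((S ^ p) v) = v := by
  have := pow_mul_pow_eq_one p hTS
  exact DFunLike.congr_fun this v

theorem T_pow_S_lt {F : Type*} [NormedAddCommGroup F] [NormedSpace ℝ F] (S T : F →L[ℝ] F) (u : F) (hTS : T * S = 1)
    (hTu : T u = 0) (p i : ℕ) (hi : i < p) : (T ^ p) ((S ^ i) u) = 0 := by
  obtain ⟨d, rfl⟩ : ∃ d, p = d + 1 + i := ⟨p - i - 1, by omega⟩
  rw [pow_add, mul_apply_eq_comp, T_pow_S S T hTS, pow_succ,
    mul_apply_eq_comp, hTu, map_zero]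

open Polynomial in
theorem T_pow_low {F : Type*} [NormedAddCommGroup F] [NormedSpace ℝ F] (S T : F →L[ℝ] F) (u : F) (hTS : T * S = 1)
    (hTu : T u = 0) (p : ℕ) (f : ℝ[X]) (hf : f.natDegree < p) :
    (T ^ p) ((aeval S f) u) = 0 := by
  rw [aeval_eq_sum_range' hf, sum_apply, map_sum]
  refine Finset.sum_eq_zero fun i hi => ?_
  rw [smul_apply, map_smul,
    T_pow_S_lt S T u hTS hTu p i (Finset.mem_range.mp hi), smul_zero]

open Polynomial in
theorem chi_coeff {F : Type*} [NormedAddCommGroup F] [NormedSpace ℝ F] (S T : F →L[ℝ] F) (u : F) (χ : F →L[ℝ] ℝ)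
    (hTS : T * S = 1) (hTu : T u = 0) (hχS : χ ∘L S = 0) (hχu : χ u = 1) (i : ℕ) (f : ℝ[X]) :
    χ ((T ^ i) ((aeval S f) u)) = f.coeff i := by
  induction f using Polynomial.induction_on' with
  | add f g hf hg => rw [map_add, add_apply, map_add, map_add, hf, hg]; simp
  | monomial n a =>
    rw [aeval_monomial, coeff_monomial]
    have h1 : (algebraMap ℝ (F →L[ℝ] F) a * S ^ n) u = a • (S ^ n) u := by
      rw [← Algebra.smul_def]; rfl
    rw [h1, map_smul, map_smul, smul_eq_mul]
    rcases lt_trichotomy n i with h | h | h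
    · rw [T_pow_S_lt S T u hTS hTu i n h, if_neg h.ne, map_zero, mul_zero]
    · subst h
      rw [T_pow_S S T hTS, hχu, if_pos rfl, mul_one]
    · obtain ⟨d, rfl⟩ : ∃ d, n = i + (d + 1) := ⟨n - i - 1, by omega⟩
      rw [pow_add, mul_apply_eq_comp, T_pow_S S T hTS, pow_succ',
        mul_apply_eq_comp, if_neg h.ne']
      have : χ (S ((S ^ d) u)) = 0 := DFunLike.congr_fun hχS _
      rw [this, mul_zero]

open Polynomial in
theorem ev_eval {F : Type*} [NormedAddCommGroup F] [NormedSpace ℝ F] (S T : F →L[ℝ] F) (u : F) (χ : F →L[ℝ] ℝ)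
    (hTS : T * S = 1) (hTu : T u = 0) (hχS : χ ∘L S = 0) (hχu : χ u = 1) (z : ℝ)
    (hz : IsUnit (1 - z • T)) (f : ℝ[X]) :
    χ (Ring.inverse (1 - z • T) ((aeval S f) u)) = f.eval z := by
  have hinv : ∀ v, Ring.inverse (1 - z • T) ((1 - z • T) v) = v := fun v =>
    DFunLike.congr_fun (Ring.inverse_mul_cancel _ hz) v
  have hu : Ring.inverse (1 - z • T) u = u := by
    have := hinv u
    simpa [hTu] using this
  have hS : ∀ v, χ (Ring.inverse (1 - z • T) (S v)) = z * χ (Ring.inverse (1 - z • T) v) := by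
    intro v
    have h1 := hinv (S v)
    have h2 : T (S v) = v := DFunLike.congr_fun hTS v
    have h3 : (1 - z • T) (S v) = S v - z • v := by simp [h2]
    rw [h3, map_sub, map_smul] at h1
    have h4 := congrArg χ h1
    have h5 : χ (S v) = 0 := DFunLike.congr_fun hχS _
    rw [h5, map_sub, map_smul, smul_eq_mul] at h4
    linarith
  induction f using Polynomial.induction_on' with
  | add f g hf hg => rw [map_add, add_apply, map_add, map_add, hf, hg]; simp
  | monomial n a =>
    rw [aeval_monomial, eval_monomial]
    have h1 : (algebraMap ℝ (F →L[ℝ] F) a * S ^ n) u = a • (S ^ n) u := by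
      rw [← Algebra.smul_def]; rfl
    rw [h1, map_smul, map_smul, smul_eq_mul]
    congr 1
    induction n with
    | zero => simp [hu, hχu]
    | succ n ih => rw [pow_succ', mul_apply_eq_comp, hS, ih (by
        rw [← Algebra.smul_def]; rfl), pow_succ']

open Polynomial in
/-- The perturbed operator. -/
noncomputable def UU {F : Type*} [NormedAddCommGroup F] [NormedSpace ℝ F] (S T : F →L[ℝ] F) (p : ℕ) (Q : ℝ[X]) :
    F →L[ℝ] F := 1 + ∑ i ∈ Finset.range p, Q.coeff i • (S ^ i * T ^ p)

open Polynomial in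
theorem UU_apply {F : Type*} [NormedAddCommGroup F] [NormedSpace ℝ F] (S T : F →L[ℝ] F) (u : F) (hTS : T * S = 1)
    (hTu : T u = 0) (p : ℕ) (Q : ℝ[X]) (hQ : Q.Monic) (hQp : Q.natDegree = p)
    (d r : ℝ[X]) (hr : r.natDegree < p) :
    UU S T p Q ((aeval S (X ^ p * d + r)) u) = (aeval S (Q * d + r)) u := by
  have h1 : (T ^ p) ((aeval S (X ^ p * d + r)) u) = (aeval S d) u := by
    rw [map_add, add_apply, map_add, T_pow_low S T u hTS hTu p r hr, add_zero,
      map_mul, map_pow, aeval_X, mul_apply_eq_comp, T_pow_S S T hTS]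
  have h2 : Q = X ^ p + ∑ i ∈ Finset.range p, C (Q.coeff i) * X ^ i := by
    conv_lhs => rw [hQ.as_sum, hQp]
  have h3 : UU S T p Q ((aeval S (X ^ p * d + r)) u) = (aeval S (X ^ p * d + r)) u
      + ∑ i ∈ Finset.range p, Q.coeff i • (S ^ i) ((aeval S d) u) := by
    simp only [UU, add_apply, sum_apply,
      smul_apply, mul_apply_eq_comp, h1,
      one_apply_eq_self]
  have h4 : (aeval S (Q * d + r)) u = (aeval S (X ^ p * d + r)) u
      + (aeval S ((∑ i ∈ Finset.range p, C (Q.coeff i) * X ^ i) * d)) u := by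
    conv_lhs => rw [h2]
    rw [← add_apply, ← map_add]
    congr 2
    ring
  rw [h3, h4]
  congr 1
  rw [Finset.sum_mul, map_sum, sum_apply]
  refine Finset.sum_congr rfl fun i _ => ?_
  rw [map_mul, map_mul, map_pow, aeval_X, aeval_C, ← Algebra.smul_def]
  rfl

open Polynomial in
theorem UU_inv {F : Type*} [NormedAddCommGroup F] [NormedSpace ℝ F] (S T : F →L[ℝ] F) (u : F) (hTS : T * S = 1)
    (hTu : T u = 0) (p : ℕ) (hp : 1 ≤ p) (Q : ℝ[X]) (hQ : Q.Monic) (hQp : Q.natDegree = p)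
    (hU : IsUnit (UU S T p Q)) (k : ℕ) :
    Ring.inverse (UU S T p Q) ((S ^ k) u) =
      (aeval S (X ^ p * (X ^ k /ₘ Q) + X ^ k %ₘ Q)) u := by
  have hQ1 : Q ≠ 1 := by
    rintro rfl
    simp at hQp
    omega
  have h := UU_apply S T u hTS hTu p Q hQ hQp (X ^ k /ₘ Q) (X ^ k %ₘ Q)
    (hQp ▸ natDegree_modByMonic_lt _ hQ hQ1)
  rw [add_comm (Q * _), modByMonic_add_div, map_pow, aeval_X] at h
  rw [← h]
  exact DFunLike.congr_fun (Ring.inverse_mul_cancel _ hU) _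

theorem clm_apply_an {X F G : Type*} [NormedAddCommGroup X] [NormedSpace ℝ X]
    [NormedAddCommGroup F] [NormedSpace ℝ F] [NormedAddCommGroup G] [NormedSpace ℝ G]
    {f : X → F →L[ℝ] G} {v : X → F} {x : X} (hf : AnalyticAt ℝ f x) (hv : AnalyticAt ℝ v x) :
    AnalyticAt ℝ (fun x => f x (v x)) x :=
  ((ContinuousLinearMap.id ℝ (F →L[ℝ] G)).analyticAt_bilinear (f x, v x)).comp₂ hf hv

open Polynomial in
set_option maxHeartbeats 1600000 in
theorem local_div_aux {F E Y : Type*} [NormedAddCommGroup F] [NormedSpace ℝ F] [CompleteSpace F] [NormedAddCommGroup E] [NormedSpace ℝ E]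
    [NormedAddCommGroup Y] [NormedSpace ℝ Y]
    (p : ℕ) (hp : 1 ≤ p) (g : E → ℝ) (e : E) (x0 : E)
    (Q : Y → ℝ[X]) (hQ : ∀ t, (Q t).Monic) (hQp : ∀ t, (Q t).natDegree = p) (t0 : Y)
    (hQa : ∀ i < p, AnalyticAt ℝ (fun t => (Q t).coeff i) t0) (hQ0 : Q t0 = X ^ p)
    (S T : F →L[ℝ] F) (u : F) (χ : F →L[ℝ] ℝ) (hTS : T * S = 1) (hTu : T u = 0)
    (hχS : χ ∘L S = 0) (hχu : χ u = 1)
    (hsum : ∀ᶠ yz : E × ℝ in 𝓝 (x0, 0),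
        HasSum (fun k => tc g e k yz.1 * yz.2 ^ k) (g (yz.1 + yz.2 • e)))
    (hA : AnalyticAt ℝ (fun y => ∑' k, tc g e k y • (S ^ k) u) x0)
    (hAs : ∀ᶠ y in 𝓝 x0, Summable fun k => tc g e k y • (S ^ k) u) :
    (∀ i < p, AnalyticAt ℝ (fun w : E × ℝ × Y =>
      ∑' k, tc g e k w.1 * (X ^ k %ₘ Q w.2.2).coeff i) (x0, 0, t0)) ∧
    AnalyticAt ℝ (fun w : E × ℝ × Y =>
      ∑' k, tc g e k w.1 * (X ^ k /ₘ Q w.2.2).eval w.2.1) (x0, 0, t0) ∧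
    ∀ᶠ w : E × ℝ × Y in 𝓝 (x0, 0, t0), g (w.1 + w.2.1 • e) =
      (∑' k, tc g e k w.1 * (X ^ k /ₘ Q w.2.2).eval w.2.1) * (Q w.2.2).eval w.2.1 +
      ∑ i ∈ Finset.range p, (∑' k, tc g e k w.1 * (X ^ k %ₘ Q w.2.2).coeff i) * w.2.1 ^ i := by
  set w0 : E × ℝ × Y := (x0, 0, t0) with hw0
  -- analytic ingredients on the product space
  have a1 : AnalyticAt ℝ (fun w : E × ℝ × Y => w.1) w0 := analyticAt_fst
  have a2 : AnalyticAt ℝ (fun w : E × ℝ × Y => w.2.1) w0 := analyticAt_fst.comp analyticAt_snd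
  have a3 : AnalyticAt ℝ (fun w : E × ℝ × Y => w.2.2) w0 := analyticAt_snd.comp analyticAt_snd
  have hA' : AnalyticAt ℝ (fun w : E × ℝ × Y => ∑' k, tc g e k w.1 • (S ^ k) u) w0 :=
    AnalyticAt.comp (f := fun w : E × ℝ × Y => w.1) (x := w0) hA a1
  have hUa : AnalyticAt ℝ (fun w : E × ℝ × Y => UU S T p (Q w.2.2)) w0 := by
    unfold UU
    refine analyticAt_const.add (Finset.analyticAt_fun_sum _ fun i hi => ?_)
    refine AnalyticAt.fun_smul ?_ analyticAt_const
    exact AnalyticAt.comp (f := fun w : E × ℝ × Y => w.2.2) (x := w0)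
      (hQa i (Finset.mem_range.mp hi)) a3
  have hU0 : UU S T p (Q t0) = 1 := by
    rw [UU, hQ0]
    simp only [add_eq_left]
    refine Finset.sum_eq_zero fun i hi => ?_
    rw [coeff_X_pow, if_neg (Finset.mem_range.mp hi).ne, zero_smul]
  have hinv1 : AnalyticAt ℝ Ring.inverse (1 : F →L[ℝ] F) := by
    simpa using analyticAt_inverse (𝕜 := ℝ) (1 : (F →L[ℝ] F)ˣ)
  have hUi : AnalyticAt ℝ (fun w : E × ℝ × Y => Ring.inverse (UU S T p (Q w.2.2))) w0 := by
    exact AnalyticAt.comp_of_eq (g := Ring.inverse) (f := fun w : E × ℝ × Y => UU S T p (Q w.2.2))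
      hinv1 hUa hU0
  have hVa : AnalyticAt ℝ (fun w : E × ℝ × Y => 1 - w.2.1 • T) w0 :=
    analyticAt_const.sub (AnalyticAt.fun_smul a2 analyticAt_const)
  have hVi : AnalyticAt ℝ (fun w : E × ℝ × Y => Ring.inverse (1 - w.2.1 • T)) w0 := by
    exact AnalyticAt.comp_of_eq (g := Ring.inverse) (f := fun w : E × ℝ × Y => 1 - w.2.1 • T)
      hinv1 hVa (by simp [hw0])
  have hUu : ∀ᶠ w in 𝓝 w0, IsUnit (UU S T p (Q w.2.2)) :=
    hUa.continuousAt.eventually (Units.isOpen.mem_nhds (by simp [hw0, hU0]))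
  have hVu : ∀ᶠ w : E × ℝ × Y in 𝓝 w0, IsUnit (1 - w.2.1 • T) :=
    hVa.continuousAt.eventually (Units.isOpen.mem_nhds (by simp [hw0]))
  have hAs' : ∀ᶠ w : E × ℝ × Y in 𝓝 w0, Summable fun k => tc g e k w.1 • (S ^ k) u :=
    a1.continuousAt.eventually hAs
  have hsum' : ∀ᶠ w : E × ℝ × Y in 𝓝 w0,
      HasSum (fun k => tc g e k w.1 * w.2.1 ^ k) (g (w.1 + w.2.1 • e)) := by
    have : ContinuousAt (fun w : E × ℝ × Y => (w.1, w.2.1)) w0 := by fun_prop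
    exact this.eventually hsum
  have hB : AnalyticAt ℝ (fun w : E × ℝ × Y =>
      Ring.inverse (UU S T p (Q w.2.2)) (∑' k, tc g e k w.1 • (S ^ k) u)) w0 :=
    clm_apply_an hUi hA'
  have hQ1 : ∀ t, Q t ≠ 1 := by
    intro t ht
    have := hQp t
    rw [ht] at this
    simp at this
    omega
  have hdeg : ∀ (k : ℕ) (t : Y), (X ^ k %ₘ Q t).natDegree < p := by
    intro k t
    have := natDegree_modByMonic_lt (X ^ k) (hQ t) (hQ1 t)
    rwa [hQp t] at this
  have sB : ∀ᶠ w in 𝓝 w0, HasSum (fun k => tc g e k w.1 •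
      (aeval S (X ^ p * (X ^ k /ₘ Q w.2.2) + X ^ k %ₘ Q w.2.2)) u)
      (Ring.inverse (UU S T p (Q w.2.2)) (∑' k, tc g e k w.1 • (S ^ k) u)) := by
    filter_upwards [hUu, hAs'] with w h1 h2
    have := (Ring.inverse (UU S T p (Q w.2.2))).hasSum h2.hasSum
    simpa only [map_smul, UU_inv S T u hTS hTu p hp _ (hQ _) (hQp _) h1] using this
  have sh : ∀ i < p, ∀ᶠ w in 𝓝 w0, HasSum (fun k => tc g e k w.1 * (X ^ k %ₘ Q w.2.2).coeff i)
      (χ ((T ^ i) (Ring.inverse (UU S T p (Q w.2.2)) (∑' k, tc g e k w.1 • (S ^ k) u)))) := by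
    intro i hi
    filter_upwards [sB] with w hw
    have := (χ ∘L (T ^ i)).hasSum hw
    have hfun : (fun k => tc g e k w.1 * (X ^ k %ₘ Q w.2.2).coeff i) = fun k => (χ ∘L (T ^ i))
        (tc g e k w.1 • (aeval S (X ^ p * (X ^ k /ₘ Q w.2.2) + X ^ k %ₘ Q w.2.2)) u) := by
      funext k
      rw [map_smul, ContinuousLinearMap.comp_apply, chi_coeff S T u χ hTS hTu hχS hχu, coeff_add,
        coeff_X_pow_mul', if_neg (by omega), zero_add, smul_eq_mul]
    rw [hfun]
    exact this
  have sq : ∀ᶠ w : E × ℝ × Y in 𝓝 w0, HasSum (fun k => tc g e k w.1 * (X ^ k /ₘ Q w.2.2).eval w.2.1)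
      (χ (Ring.inverse (1 - w.2.1 • T) ((T ^ p)
        (Ring.inverse (UU S T p (Q w.2.2)) (∑' k, tc g e k w.1 • (S ^ k) u))))) := by
    filter_upwards [sB, hVu] with w hw hv
    have := ContinuousLinearMap.hasSum (χ ∘L (Ring.inverse (1 - w.2.1 • T) * (T ^ p))) hw
    have hfun : (fun k => tc g e k w.1 * (X ^ k /ₘ Q w.2.2).eval w.2.1) = fun k =>
        (χ ∘L (Ring.inverse (1 - w.2.1 • T) * (T ^ p)))
        (tc g e k w.1 • (aeval S (X ^ p * (X ^ k /ₘ Q w.2.2) + X ^ k %ₘ Q w.2.2)) u) := by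
      funext k
      rw [map_smul, ContinuousLinearMap.comp_apply, mul_apply_eq_comp, map_add, add_apply,
        map_add, T_pow_low S T u hTS hTu p _ (hdeg k w.2.2),
        add_zero, map_mul, map_pow, aeval_X, mul_apply_eq_comp, T_pow_S S T hTS,
        ev_eval S T u χ hTS hTu hχS hχu _ hv, smul_eq_mul]
    rw [hfun]
    exact this
  refine ⟨fun i hi => ?_, ?_, ?_⟩
  · have : AnalyticAt ℝ (fun w : E × ℝ × Y => (χ ∘L (T ^ i))
        (Ring.inverse (UU S T p (Q w.2.2)) (∑' k, tc g e k w.1 • (S ^ k) u))) w0 :=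
      clm_apply_an analyticAt_const hB
    refine this.congr ?_
    filter_upwards [sh i hi] with w hw
    exact hw.tsum_eq.symm
  · have : AnalyticAt ℝ (fun w : E × ℝ × Y => χ (Ring.inverse (1 - w.2.1 • T) ((T ^ p)
        (Ring.inverse (UU S T p (Q w.2.2)) (∑' k, tc g e k w.1 • (S ^ k) u))))) w0 :=
      clm_apply_an analyticAt_const (clm_apply_an hVi (clm_apply_an analyticAt_const hB))
    refine this.congr ?_
    filter_upwards [sq] with w hw
    exact hw.tsum_eq.symm
  · have sh' : ∀ᶠ w in 𝓝 w0, ∀ i ∈ Finset.range p,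
        HasSum (fun k => tc g e k w.1 * (X ^ k %ₘ Q w.2.2).coeff i)
        (∑' k, tc g e k w.1 * (X ^ k %ₘ Q w.2.2).coeff i) := by
      rw [Filter.eventually_all_finset]
      intro i hi
      filter_upwards [sh i (Finset.mem_range.mp hi)] with w hw
      exact hw.summable.hasSum
    filter_upwards [sh', sq, hsum'] with w h1 h2 h3
    have h4 := (h2.summable.hasSum.mul_right ((Q w.2.2).eval w.2.1)).add
      (hasSum_sum fun i hi => (h1 i hi).mul_right (w.2.1 ^ i))
    refine h3.unique ?_
    refine Eq.mp (congrArg (fun f => HasSum f _) (funext fun k => ?_)) h4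
    have h5 : (X ^ k %ₘ Q w.2.2).eval w.2.1 =
        ∑ i ∈ Finset.range p, (X ^ k %ₘ Q w.2.2).coeff i * w.2.1 ^ i :=
      eval_eq_sum_range' (hdeg k w.2.2) _
    have h6 := congrArg (eval w.2.1) (modByMonic_add_div (X ^ k) (Q w.2.2))
    rw [eval_add, eval_mul, eval_pow, eval_X, h5] at h6
    rw [← h6]
    simp only [mul_add, Finset.mul_sum, mul_assoc]
    rw [add_comm, mul_comm (eval w.2.1 (Q w.2.2))]

open Polynomial in
theorem local_div {E Y : Type*} [NormedAddCommGroup E] [NormedSpace ℝ E]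
    [NormedAddCommGroup Y] [NormedSpace ℝ Y]
    (p : ℕ) (hp : 1 ≤ p) (g : E → ℝ) (e : E) (he : ‖e‖ ≤ 1) (x0 : E) (hg : AnalyticAt ℝ g x0)
    (Q : Y → ℝ[X]) (hQ : ∀ t, (Q t).Monic) (hQp : ∀ t, (Q t).natDegree = p) (t0 : Y)
    (hQa : ∀ i < p, AnalyticAt ℝ (fun t => (Q t).coeff i) t0) (hQ0 : Q t0 = X ^ p) :
    (∀ i < p, AnalyticAt ℝ (fun w : E × ℝ × Y =>
      ∑' k, tc g e k w.1 * (X ^ k %ₘ Q w.2.2).coeff i) (x0, 0, t0)) ∧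
    AnalyticAt ℝ (fun w : E × ℝ × Y =>
      ∑' k, tc g e k w.1 * (X ^ k /ₘ Q w.2.2).eval w.2.1) (x0, 0, t0) ∧
    ∀ᶠ w : E × ℝ × Y in 𝓝 (x0, 0, t0), g (w.1 + w.2.1 • e) =
      (∑' k, tc g e k w.1 * (X ^ k /ₘ Q w.2.2).eval w.2.1) * (Q w.2.2).eval w.2.1 +
      ∑ i ∈ Finset.range p, (∑' k, tc g e k w.1 * (X ^ k %ₘ Q w.2.2).coeff i) * w.2.1 ^ i := by
  obtain ⟨ρ, hρ, hsum, han⟩ := tc_analytic (F := ℕ →ᵇ ℝ) g e he x0 hg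
  obtain ⟨S, T, u, χ, hTS, hTu, hχS, hχu, hSu⟩ := seqModel ρ hρ
  obtain ⟨hA, hAs⟩ := han (fun k => (S ^ k) u) hSu
  exact local_div_aux p hp g e x0 Q hQ hQp t0 hQa hQ0 S T u χ hTS hTu hχS hχu hsum hA hAs

open Polynomial in
/-- The generic polynomial. -/
noncomputable def gp (p : ℕ) (t : Fin p → ℝ) : ℝ[X] :=
  X ^ p + ∑ j : Fin p, C (t j) * X ^ (p - (j.1 + 1))

open Polynomial in
theorem gp_deg_aux (p : ℕ) (t : Fin p → ℝ) :
    (∑ j : Fin p, C (t j) * X ^ (p - (j.1 + 1)) : ℝ[X]).degree < (p : WithBot ℕ) := by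
  refine (degree_sum_le _ _).trans_lt ?_
  refine (Finset.sup_lt_iff (WithBot.bot_lt_coe p)).2 ?_
  intro j _
  refine (degree_C_mul_X_pow_le _ _).trans_lt ?_
  have := j.2
  exact WithBot.coe_lt_coe.2 (by omega : p - (j.1 + 1) < p)

open Polynomial in
theorem gp_monic (p : ℕ) (t : Fin p → ℝ) : (gp p t).Monic := monic_X_pow_add (gp_deg_aux p t)

open Polynomial in
theorem gp_natDegree (p : ℕ) (t : Fin p → ℝ) : (gp p t).natDegree = p := by
  apply natDegree_eq_of_degree_eq_some
  rw [gp, degree_add_eq_left_of_degree_lt, degree_X_pow]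
  rw [degree_X_pow]
  exact gp_deg_aux p t

theorem sum_fin_rev (p : ℕ) (f : ℕ → ℝ) :
    ∑ j : Fin p, f (p - (j.1 + 1)) = ∑ i ∈ Finset.range p, f i := by
  rw [← Finset.sum_range_reflect, Finset.sum_range]
  refine Finset.sum_congr rfl fun j _ => ?_
  congr 1
  omega

open Polynomial in
theorem gp_diag (p : ℕ) (t : Fin p → ℝ) (a : ℝ)
    (ht : ∀ j : Fin p, t j = (-1 : ℝ) ^ (j.1 + 1) * (p.choose (j.1 + 1)) * a ^ (j.1 + 1)) :
    gp p t = (X + C (-a)) ^ p := by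
  have h1 : ((X + C (-a)) ^ p : ℝ[X]) =
      X ^ p + ∑ i ∈ Finset.range p, C (((X + C (-a)) ^ p : ℝ[X]).coeff i) * X ^ i := by
    have hm : ((X + C (-a)) ^ p : ℝ[X]).Monic := (monic_X_add_C _).pow p
    have hd : ((X + C (-a)) ^ p : ℝ[X]).natDegree = p := by
      rw [(monic_X_add_C _).natDegree_pow, natDegree_X_add_C, mul_one]
    conv_lhs => rw [hm.as_sum, hd]
  rw [h1, gp]
  congr 1
  rw [← Finset.sum_range_reflect, Finset.sum_range]
  refine Finset.sum_congr rfl fun j _ => ?_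
  have hj := j.2
  have e1 : p - 1 - j.1 = p - (j.1 + 1) := by omega
  rw [e1, ht, coeff_X_add_C_pow, Nat.sub_sub_self hj, Nat.choose_symm (by omega), neg_pow a]
  congr 2
  simp only [Nat.succ_eq_add_one]
  ring

end GenDiv

open GenDiv Polynomial in
theorem generic_division_real (m p : ℕ) (hp : 1 ≤ p)
    (Ω : Set (Fin (m + 1) → ℝ)) (hΩ : IsOpen Ω)
    (g : (Fin (m + 1) → ℝ) → ℝ) (hg : AnalyticOnNhd ℝ g Ω) :
    ∃ W : Set ((Fin (m + 1) → ℝ) × (Fin p → ℝ)),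
      IsOpen W ∧
      {xt : (Fin (m + 1) → ℝ) × (Fin p → ℝ) | xt.1 ∈ Ω ∧
        ∀ j : Fin p, xt.2 j =
          (-1 : ℝ) ^ (j.1 + 1) * (p.choose (j.1 + 1)) * xt.1 (Fin.last m) ^ (j.1 + 1)} ⊆ W ∧
      W ⊆ Ω ×ˢ (Set.univ : Set (Fin p → ℝ)) ∧
      ∃ (q : ((Fin (m + 1) → ℝ) × (Fin p → ℝ)) → ℝ)
        (h : Fin p → ((Fin m → ℝ) × (Fin p → ℝ)) → ℝ),
        AnalyticOnNhd ℝ q W ∧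
        (∀ j : Fin p, AnalyticOnNhd ℝ (h j) (dropLastProjR m p '' W)) ∧
        ∀ xt ∈ W,
          g xt.1 = q xt *
              (xt.1 (Fin.last m) ^ p +
                ∑ j : Fin p, xt.2 j * xt.1 (Fin.last m) ^ (p - (j.1 + 1))) +
            ∑ j : Fin p, h j (dropLastProjR m p xt) * xt.1 (Fin.last m) ^ (p - (j.1 + 1)) := by
  let c : (Fin p → ℝ) → ℝ := fun t => -(t ⟨0, hp⟩) / p
  have hc : ∀ t, AnalyticAt ℝ c t := by
    intro t
    have : AnalyticAt ℝ (fun t : Fin p → ℝ => t ⟨0, hp⟩) t :=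
      (ContinuousLinearMap.proj (R := ℝ) (φ := fun _ : Fin p => ℝ) ⟨0, hp⟩).analyticAt t
    exact this.neg.div_const
  let e : Fin (m + 1) → ℝ := Pi.single (Fin.last m) 1
  have he : ‖e‖ ≤ 1 := by
    refine (pi_norm_le_iff_of_nonneg zero_le_one).2 fun i => ?_
    by_cases hi : i = Fin.last m
    · subst hi; simp [e]
    · simp [e, hi]
  let Q : (Fin p → ℝ) → ℝ[X] := fun t => taylor (c t) (gp p t)
  have hQ : ∀ t, (Q t).Monic := by
    intro t
    rw [Monic, leadingCoeff_taylor]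
    exact gp_monic p t
  have hQp : ∀ t, (Q t).natDegree = p := fun t => by
    rw [natDegree_taylor, gp_natDegree]
  have hQa : ∀ t0, ∀ i < p, AnalyticAt ℝ (fun t => (Q t).coeff i) t0 := by
    intro t0 i hi
    have : (fun t => (Q t).coeff i) = fun t : Fin p → ℝ => (c t) ^ (p - i) * (p.choose i : ℝ) +
        ∑ j : Fin p, t j * ((c t) ^ (p - (j.1 + 1) - i) * ((p - (j.1 + 1)).choose i : ℝ)) := by
      funext t
      simp only [Q, gp, map_add, map_sum, taylor_mul, taylor_pow, taylor_X, taylor_C, coeff_add,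
        finset_sum_coeff, coeff_C_mul, coeff_X_add_C_pow]
    rw [this]
    refine AnalyticAt.fun_add (((hc t0).fun_pow _).fun_mul analyticAt_const)
      (Finset.analyticAt_fun_sum _ fun j _ => ?_)
    exact AnalyticAt.fun_mul
      ((ContinuousLinearMap.proj (R := ℝ) (φ := fun _ : Fin p => ℝ) j).analyticAt t0)
      (((hc t0).fun_pow _).fun_mul analyticAt_const)
  let b : ℕ → ((Fin (m + 1) → ℝ) × ℝ × (Fin p → ℝ)) → ℝ := fun i w =>
    ∑' k, tc g e k w.1 * (X ^ k %ₘ Q w.2.2).coeff i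
  let d : ((Fin (m + 1) → ℝ) × ℝ × (Fin p → ℝ)) → ℝ := fun w =>
    ∑' k, tc g e k w.1 * (X ^ k /ₘ Q w.2.2).eval w.2.1
  let ψ : ((Fin m → ℝ) × (Fin p → ℝ)) → ((Fin (m + 1) → ℝ) × ℝ × (Fin p → ℝ)) := fun y =>
    (Fin.snoc (α := fun _ => ℝ) y.1 (c y.2), 0, y.2)
  let φ : ((Fin (m + 1) → ℝ) × (Fin p → ℝ)) → ((Fin (m + 1) → ℝ) × ℝ × (Fin p → ℝ)) := fun w =>
    (Fin.snoc (α := fun _ => ℝ) (w.1 ∘ Fin.castSucc) (c w.2), w.1 (Fin.last m) - c w.2, w.2)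
  have hc2 : ∀ y : (Fin m → ℝ) × (Fin p → ℝ), AnalyticAt ℝ (fun y => c y.2) y := fun y =>
    AnalyticAt.comp (f := fun y : (Fin m → ℝ) × (Fin p → ℝ) => y.2) (x := y) (hc y.2) analyticAt_snd
  have hc3 : ∀ y : (Fin (m + 1) → ℝ) × (Fin p → ℝ), AnalyticAt ℝ (fun y => c y.2) y := fun y =>
    AnalyticAt.comp (f := fun y : (Fin (m + 1) → ℝ) × (Fin p → ℝ) => y.2) (x := y) (hc y.2)
      analyticAt_snd
  have hψ : ∀ y, AnalyticAt ℝ ψ y := by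
    intro y
    refine AnalyticAt.prod (AnalyticAt.pi fun i => ?_) (analyticAt_const.prod analyticAt_snd)
    refine Fin.lastCases ?_ (fun i => ?_) i
    · simpa using hc2 y
    · simp only [Fin.snoc_castSucc]
      exact AnalyticAt.comp (f := fun y : (Fin m → ℝ) × (Fin p → ℝ) => y.1) (x := y)
        ((ContinuousLinearMap.proj (R := ℝ) (φ := fun _ : Fin m => ℝ) i).analyticAt _) analyticAt_fst
  have hcoord : ∀ (i : Fin (m + 1)) (w : (Fin (m + 1) → ℝ) × (Fin p → ℝ)),
      AnalyticAt ℝ (fun w : (Fin (m + 1) → ℝ) × (Fin p → ℝ) => w.1 i) w := fun i w =>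
    AnalyticAt.comp (f := fun y : (Fin (m + 1) → ℝ) × (Fin p → ℝ) => y.1) (x := w)
        ((ContinuousLinearMap.proj (R := ℝ) (φ := fun _ : Fin (m + 1) => ℝ) i).analyticAt _)
        analyticAt_fst
  have hφ : ∀ w, AnalyticAt ℝ φ w := by
    intro w
    refine AnalyticAt.prod (AnalyticAt.pi fun i => ?_)
      (((hcoord _ w).fun_sub (hc3 w)).prod analyticAt_snd)
    refine Fin.lastCases ?_ (fun i => ?_) i
    · simpa using hc3 w
    · simpa using hcoord i.castSucc w
  let q : ((Fin (m + 1) → ℝ) × (Fin p → ℝ)) → ℝ := fun w => d (φ w)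
  let h : Fin p → ((Fin m → ℝ) × (Fin p → ℝ)) → ℝ := fun j y =>
    ∑ i ∈ Finset.range p, b i (ψ y) * ((X + C (-c y.2)) ^ i : ℝ[X]).coeff (p - (j.1 + 1))
  have hpcont : Continuous (dropLastProjR m p) := by
    unfold dropLastProjR
    fun_prop
  let good : ((Fin (m + 1) → ℝ) × (Fin p → ℝ)) → Prop := fun xt =>
    xt.1 ∈ Ω ∧ AnalyticAt ℝ q xt ∧ (∀ j, AnalyticAt ℝ (h j) (dropLastProjR m p xt)) ∧
      g xt.1 = q xt *
              (xt.1 (Fin.last m) ^ p +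
                ∑ j : Fin p, xt.2 j * xt.1 (Fin.last m) ^ (p - (j.1 + 1))) +
            ∑ j : Fin p, h j (dropLastProjR m p xt) * xt.1 (Fin.last m) ^ (p - (j.1 + 1))
  refine ⟨interior {xt | good xt}, isOpen_interior, ?_, ?_, q, h, ?_, ?_, ?_⟩
  · rintro ⟨x, t⟩ ⟨hx, ht⟩
    simp only at hx ht
    rw [mem_interior_iff_mem_nhds]
    have hct : c t = x (Fin.last m) := by
      have hp0 : (p : ℝ) ≠ 0 := by positivity
      simp only [c, ht]
      simp
      field_simp
    have hQ0 : Q t = X ^ p := by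
      simp only [Q]
      rw [gp_diag p t _ ht, hct, taylor_pow]
      simp
    obtain ⟨L1, L2, L3⟩ := local_div p hp g e he x (hg x hx) Q hQ hQp t (hQa t) hQ0
    have hsn : (Fin.snoc (α := fun _ => ℝ) (x ∘ Fin.castSucc) (c t) : Fin (m + 1) → ℝ) = x := by
      funext i
      refine Fin.lastCases ?_ (fun i => ?_) i
      · simp [hct]
      · simp
    have hφ0 : φ (x, t) = (x, 0, t) := by
      simp only [φ, hsn, hct, sub_self]
      rw [← hct, hsn]
    have hψ0 : ψ (dropLastProjR m p (x, t)) = (x, 0, t) := by simp [ψ, dropLastProjR, hsn]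
    have hqa : AnalyticAt ℝ q (x, t) := AnalyticAt.comp_of_eq (g := d) (f := φ) L2 (hφ _) hφ0
    have hha : ∀ j, AnalyticAt ℝ (h j) (dropLastProjR m p (x, t)) := by
      intro j
      refine Finset.analyticAt_fun_sum _ fun i hi => ?_
      refine AnalyticAt.fun_mul
        (AnalyticAt.comp_of_eq (g := b i) (f := ψ) (L1 i (Finset.mem_range.mp hi)) (hψ _) hψ0) ?_
      simp only [coeff_X_add_C_pow]
      exact ((hc2 _).fun_neg.fun_pow _).fun_mul analyticAt_const
    have e1 : ∀ᶠ xt : (Fin (m + 1) → ℝ) × (Fin p → ℝ) in 𝓝 (x, t), xt.1 ∈ Ω :=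
      continuousAt_fst.eventually (hΩ.mem_nhds hx)
    have e3 : ∀ᶠ xt in 𝓝 (x, t), ∀ j, AnalyticAt ℝ (h j) (dropLastProjR m p xt) := by
      rw [Filter.eventually_all]
      intro j
      exact hpcont.continuousAt.eventually (hha j).eventually_analyticAt
    have e4 := (hφ (x, t)).continuousAt.eventually (hφ0.symm ▸ L3)
    filter_upwards [e1, hqa.eventually_analyticAt, e3, e4] with xt h1 h2 h3 h4
    refine ⟨h1, h2, h3, ?_⟩
    have hx1 : (φ xt).1 + (φ xt).2.1 • e = xt.1 := by
      funext i
      refine Fin.lastCases ?_ (fun i => ?_) i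
      · simp [φ, e]
      · simp [φ, e, (Fin.castSucc_lt_last i).ne]
    rw [hx1] at h4
    rw [h4]
    congr 1
    · change d (φ xt) * _ = d (φ xt) * _
      congr 1
      simp only [φ, Q, taylor_eval, sub_add_cancel, gp]
      simp [eval_finset_sum]
    · have hb : ∀ i, b i (ψ (dropLastProjR m p xt)) = b i (φ xt) := fun i => rfl
      simp only [h, hb]
      change ∑ i ∈ Finset.range p, b i (φ xt) * _ = _
      simp only [Finset.sum_mul]
      rw [Finset.sum_comm]
      refine Finset.sum_congr rfl fun i hi => ?_
      simp only [mul_assoc]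
      rw [← Finset.mul_sum]
      congr 1
      rw [sum_fin_rev p (fun n => ((X + C (-c (dropLastProjR m p xt).2)) ^ i : ℝ[X]).coeff n *
        xt.1 (Fin.last m) ^ n), ← eval_eq_sum_range']
      · simp [φ, dropLastProjR, sub_eq_add_neg]
      · rw [(monic_X_add_C _).natDegree_pow, natDegree_X_add_C, mul_one]
        exact Finset.mem_range.mp hi
  · intro xt hxt
    exact ⟨(show good xt from interior_subset (s := {xt | good xt}) hxt).1, trivial⟩
  · intro xt hxt
    exact (show good xt from interior_subset (s := {xt | good xt}) hxt).2.1
  · rintro j _ ⟨xt, hxt, rfl⟩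
    exact (show good xt from interior_subset (s := {xt | good xt}) hxt).2.2.1 j
  · intro xt hxt
    exact (show good xt from interior_subset (s := {xt | good xt}) hxt).2.2.2
end

section
/- Let X be a nonempty topological space and let E be a ring of continuous real-valued functions on X (a subring of C(X, ℝ)). Call a subset A ⊆ X an E-set if A is a finite union of sets of the form {x ∈ X : φ₀(x) = 0, φ₁(x) > 0, …, φ_s(x) > 0} with φ₀, φ₁, …, φ_s ∈ E. For φ ∈ E[T] and (x, t) ∈ X × ℝ let φ(x, t) ∈ ℝ denote the result of evaluating the coefficients of φ at x and then the resulting real polynomial at t. Let φ₁(T), …, φ_M(T) ∈ E[T]. Then the list φ₁, …, φ_M can be augmented to a list φ₁, …, φ_N ∈ E[T] (with M ≤ N), and X can be partitioned into finitely many E-sets X₁, …, X_k, such that for each connected component C of each X_i there are finitely many continuous real-valued functions ξ_{C,1} < ⋯ < ξ_{C,μ(C)} on C with the following two properties: (1) each function φ_n, 1 ≤ n ≤ N, has constant sign (−1, 0, or 1) on each of the graphs Γ(ξ_{C,j}) := {(x, ξ_{C,j}(x)) : x ∈ C}, 1 ≤ j ≤ μ(C), and on each of the bands (ξ_{C,j},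 ξ_{C,j+1}) := {(x, t) ∈ C × ℝ : ξ_{C,j}(x) < t < ξ_{C,j+1}(x)}, 0 ≤ j ≤ μ(C), where ξ_{C,0} := −∞ and ξ_{C,μ(C)+1} := +∞ by convention; and (2) each of the graphs and bands from (1) equals {(x, t) ∈ C × ℝ : sign(φ_n(x, t)) = ε(n) for n = 1, …, N} for a suitable sign condition ε : {1, …, N} → {−1, 0, 1}. -/
variable {X : Type*} [TopologicalSpace X]

/-- A basic `E`-set: `{x ∈ X : φ₀(x) = 0, φ₁(x) > 0, …, φ_s(x) > 0}` with all `φᵢ ∈ E`. -/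
def IsBasicESet (E : Subring (X → ℝ)) (A : Set X) : Prop :=
  ∃ (φ₀ : X → ℝ) (_ : φ₀ ∈ E) (s : ℕ) (φ : Fin s → X → ℝ) (_ : ∀ i, φ i ∈ E),
    A = {x : X | φ₀ x = 0 ∧ ∀ i : Fin s, 0 < φ i x}

/-- An `E`-set: a finite union of basic `E`-sets. -/
def IsESet (E : Subring (X → ℝ)) (A : Set X) : Prop :=
  ∃ (k : ℕ) (B : Fin k → Set X), (∀ i, IsBasicESet E (B i)) ∧ A = ⋃ i, B i

/-- Evaluation of `φ ∈ E[T]` at `(x, t) ∈ X × ℝ`: evaluate the coefficients of `φ` at `x`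
and the resulting real polynomial at `t`. -/
noncomputable def polyEval (E : Subring (X → ℝ)) (φ : Polynomial E) (x : X) (t : ℝ) : ℝ :=
  Polynomial.eval t (φ.map ((Pi.evalRingHom (fun _ : X => ℝ) x).comp E.subtype))

/-- The graph `Γ(ξ_j)` of the `j`-th of the functions `ξ : Fin μ → X → ℝ` over `C`. -/
def cellGraph (C : Set X) {μ : ℕ} (ξ : Fin μ → X → ℝ) (j : Fin μ) : Set (X × ℝ) :=
  {q : X × ℝ | q.1 ∈ C ∧ q.2 = ξ j q.1}

/-- The band `(ξ_j, ξ_{j+1})` over `C`, for `j : Fin (μ+1)`, with the conventions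
`ξ₀ = −∞` (no lower constraint when `j = 0`) and `ξ_{μ+1} = +∞` (no upper constraint
when `j = μ`). -/
def cellBand (C : Set X) {μ : ℕ} (ξ : Fin μ → X → ℝ) (j : Fin (μ + 1)) : Set (X × ℝ) :=
  {q : X × ℝ | q.1 ∈ C ∧
    (∀ h : 0 < j.1, ξ ⟨j.1 - 1, by have := j.isLt; omega⟩ q.1 < q.2) ∧
    (∀ h : j.1 < μ, q.2 < ξ ⟨j.1, h⟩ q.1)}

namespace CylDec
open Polynomial

lemma move {a b z w : ℝ} (h1 : a < z) (h2 : z < b) (h3 : a < w) (h4 : w < b) :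
    ∃ k : ℝ ≃o ℝ, k z = w ∧ ∀ t, (t ≤ a ∨ b ≤ t) → k t = t := by
  let F : ℝ → ℝ → ℝ → ℝ := fun z w t => if t ≤ a then t else if t ≤ z then
    a + (t - a) * ((w - a) / (z - a)) else if t ≤ b then b - (b - t) * ((b - w) / (b - z)) else t
  have key : ∀ z w, a < z → z < b → a < w → w < b → ∀ t,
      (t ≤ a ∧ F z w t = t) ∨ (a < t ∧ t ≤ z ∧ F z w t = a + (t - a) * ((w - a) / (z - a)) ∧
        a < F z w t ∧ F z w t ≤ w) ∨
      (z < t ∧ t ≤ b ∧ F z w t = b - (b - t) * ((b - w) / (b - z)) ∧ w < F z w t ∧ F z w t ≤ b) ∨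
      (b < t ∧ F z w t = t) := by
    intro z w h1 h2 h3 h4 t
    have e1 : 0 < z - a := by linarith
    have e2 : 0 < b - z := by linarith
    have e3 : 0 < w - a := by linarith
    have e4 : 0 < b - w := by linarith
    by_cases c1 : t ≤ a
    · left; exact ⟨c1, by simp [F, c1]⟩
    by_cases c2 : t ≤ z
    · right; left
      have hF : F z w t = a + (t - a) * ((w - a) / (z - a)) := by simp [F, c1, c2]
      push Not at c1
      refine ⟨c1, c2, hF, ?_, ?_⟩
      · rw [hF]
        have : 0 < (t - a) * ((w - a) / (z - a)) := by
          have : 0 < t - a := by linarith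
          positivity
        linarith
      · rw [hF]
        have : (t - a) * ((w - a) / (z - a)) ≤ (z - a) * ((w - a) / (z - a)) := by gcongr
        rw [mul_div_cancel₀ _ e1.ne'] at this
        linarith
    by_cases c3 : t ≤ b
    · right; right; left
      have hF : F z w t = b - (b - t) * ((b - w) / (b - z)) := by simp [F, c1, c2, c3]
      push Not at c2
      refine ⟨c2, c3, hF, ?_, ?_⟩
      · rw [hF]
        have : (b - t) * ((b - w) / (b - z)) < (b - z) * ((b - w) / (b - z)) := by gcongr
        rw [mul_div_cancel₀ _ e2.ne'] at this
        linarith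
      · rw [hF]
        have : 0 ≤ (b - t) * ((b - w) / (b - z)) := by
          have : 0 ≤ b - t := by linarith
          positivity
        linarith
    · right; right; right
      exact ⟨by linarith, by simp [F, c1, c2, c3]⟩
  have hm : StrictMono (F z w) := by
    intro s t hst
    have q1 : 0 < (w - a) / (z - a) := div_pos (by linarith) (by linarith)
    have q2 : 0 < (b - w) / (b - z) := div_pos (by linarith) (by linarith)
    rcases key z w h1 h2 h3 h4 s with hs | hs | hs | hs <;>
    rcases key z w h1 h2 h3 h4 t with ht | ht | ht | ht <;>
    first
      | linarith
      | nlinarith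
  have hi : Function.RightInverse (F w z) (F z w) := by
    intro t
    have e1 : z - a ≠ 0 := by linarith
    have e2 : b - z ≠ 0 := by linarith
    have e3 : w - a ≠ 0 := by linarith
    have e4 : b - w ≠ 0 := by linarith
    rcases key w z h3 h4 h1 h2 t with ht | ht | ht | ht <;>
    rcases key z w h1 h2 h3 h4 (F w z t) with hs | hs | hs | hs <;>
    first
      | (exfalso; linarith)
      | linarith
      | (rw [hs.2.2.1, ht.2.2.1]; field_simp; ring)
  refine ⟨StrictMono.orderIsoOfRightInverse _ hm _ hi, ?_, ?_⟩
  · show F z w z = w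
    have : z - a ≠ 0 := by linarith
    simp only [F, le_refl, if_true, if_neg (not_le.2 h1)]
    field_simp; ring
  · intro t ht
    show F z w t = t
    rcases key z w h1 h2 h3 h4 t with hs | hs | hs | hs
    · exact hs.2
    · exfalso; rcases ht with ht | ht <;> linarith
    · rcases ht with ht | ht
      · linarith
      · have : t = b := le_antisymm hs.2.1 ht
        rw [hs.2.2.1, this]; ring
    · exact hs.2

lemma gapMono {p g : ℝ → ℝ} (hg : Continuous g) (hp : Continuous p) {a b : ℝ} (hab : a < b)
    (mp : StrictMonoOn p (Set.Icc a b)) (mg : StrictMonoOn g (Set.Icc a b))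
    (ha : SignType.sign (p a) = SignType.sign (g a))
    (hb : SignType.sign (p b) = SignType.sign (g b)) :
    ∃ k : ℝ ≃o ℝ, (∀ t, (t ≤ a ∨ b ≤ t) → k t = t) ∧
      ∀ t ∈ Set.Icc a b, SignType.sign (p t) = SignType.sign (g (k t)) := by
  have hA : a ∈ Set.Icc a b := ⟨le_rfl, hab.le⟩
  have hB : b ∈ Set.Icc a b := ⟨hab.le, le_rfl⟩
  by_cases c : p a < 0 ∧ 0 < p b
  · obtain ⟨c1, c2⟩ := c
    have d1 : g a < 0 := by rw [← sign_eq_neg_one_iff, ← ha, sign_eq_neg_one_iff]; exact c1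
    have d2 : 0 < g b := by rw [← sign_eq_one_iff, ← hb, sign_eq_one_iff]; exact c2
    obtain ⟨z, hz, hz0⟩ := intermediate_value_Ioo hab.le hp.continuousOn ⟨c1, c2⟩
    obtain ⟨w, hw, hw0⟩ := intermediate_value_Ioo hab.le hg.continuousOn ⟨d1, d2⟩
    obtain ⟨k, hk, hk'⟩ := move hz.1 hz.2 hw.1 hw.2
    refine ⟨k, hk', fun t ht => ?_⟩
    have hkt : k t ∈ Set.Icc a b :=
      ⟨by rw [← hk' a (Or.inl le_rfl)]; exact k.monotone ht.1,
       by rw [← hk' b (Or.inr le_rfl)]; exact k.monotone ht.2⟩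
    have hzI := Set.Ioo_subset_Icc_self hz
    have hwI := Set.Ioo_subset_Icc_self hw
    rcases lt_trichotomy t z with h | h | h
    · have h1 := mp ht hzI h
      have h2 := mg hkt hwI (by rw [← hk]; exact k.strictMono h)
      rw [sign_neg (by linarith), sign_neg (by linarith)]
    · rw [h, hk, hz0, hw0]
    · have h1 := mp hzI ht h
      have h2 := mg hwI hkt (by rw [← hk]; exact k.strictMono h)
      rw [sign_pos (by linarith), sign_pos (by linarith)]
  · refine ⟨OrderIso.refl ℝ, fun _ _ => rfl, fun t ht => ?_⟩
    show _ = SignType.sign (g t)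
    rcases ht.1.eq_or_lt with h | h
    · rw [← h, ha]
    rcases ht.2.eq_or_lt with h' | h'
    · rw [h', hb]
    have p1 := mp hA ht h
    have p2 := mp ht hB h'
    have g1 := mg hA ht h
    have g2 := mg ht hB h'
    by_cases c1 : p a < 0
    · have c2 : p b ≤ 0 := by by_contra hh; exact c ⟨c1, by linarith⟩
      have : g b ≤ 0 := by
        by_contra hh
        rw [sign_pos (not_le.1 hh), sign_eq_one_iff] at hb
        linarith
      rw [sign_neg (by linarith), sign_neg (by linarith)]
    · have : 0 ≤ g a := by
        by_contra hh
        rw [sign_neg (not_le.1 hh), sign_eq_neg_one_iff] at ha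
        linarith
      rw [sign_pos (by linarith), sign_pos (by linarith)]

def SameMono (p g : ℝ → ℝ) (a b : ℝ) : Prop :=
  (StrictMonoOn p (Set.Icc a b) ∧ StrictMonoOn g (Set.Icc a b)) ∨
  (StrictAntiOn p (Set.Icc a b) ∧ StrictAntiOn g (Set.Icc a b))

lemma gap {p g : ℝ → ℝ} (hg : Continuous g) (hp : Continuous p) {a b : ℝ} (hab : a < b)
    (m : SameMono p g a b)
    (ha : SignType.sign (p a) = SignType.sign (g a))
    (hb : SignType.sign (p b) = SignType.sign (g b)) :
    ∃ k : ℝ ≃o ℝ, (∀ t, (t ≤ a ∨ b ≤ t) → k t = t) ∧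
      ∀ t ∈ Set.Icc a b, SignType.sign (p t) = SignType.sign (g (k t)) := by
  rcases m with ⟨m1, m2⟩ | ⟨m1, m2⟩
  · exact gapMono hg hp hab m1 m2 ha hb
  · obtain ⟨k, hk, hk'⟩ := gapMono (p := fun t => - p t) (g := fun t => - g t) hg.neg hp.neg hab
      m1.neg m2.neg (by simp [Left.sign_neg, ha]) (by simp [Left.sign_neg, hb])
    refine ⟨k, hk, fun t ht => ?_⟩
    have := hk' t ht
    simpa [Left.sign_neg] using this

lemma glue {p g : ℝ → ℝ} (hg : Continuous g) (hp : Continuous p) (S : Finset ℝ) :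
    (∀ s ∈ S, SignType.sign (p s) = SignType.sign (g s)) →
    (∀ a ∈ S, ∀ b ∈ S, a < b → (∀ c ∈ S, a < c → ¬ c < b) → SameMono p g a b) →
    ∃ k : ℝ ≃o ℝ, (∀ t, ((∀ s ∈ S, t ≤ s) ∨ (∀ s ∈ S, s ≤ t)) → k t = t) ∧
      (∀ s ∈ S, k s = s) ∧
      ∀ t, (∃ s ∈ S, s ≤ t) → (∃ s ∈ S, t ≤ s) → SignType.sign (p t) = SignType.sign (g (k t)) := by
  induction S using Finset.induction_on_max with
  | empty => exact fun _ _ => ⟨OrderIso.refl ℝ, fun _ _ => rfl, by simp, by simp⟩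
  | insert b S hb ih =>
    intro h1 h2
    obtain ⟨k, k1, k2, k3⟩ := ih (fun s hs => h1 s (Finset.mem_insert_of_mem hs))
      (fun a ha c hc hac hn => h2 a (Finset.mem_insert_of_mem ha) c (Finset.mem_insert_of_mem hc) hac
        (by
          intro d hd had hdc
          rcases Finset.mem_insert.1 hd with rfl | hd
          · exact absurd (hb c hc) (by linarith)
          · exact hn d hd had hdc))
    rcases S.eq_empty_or_nonempty with rfl | hne
    · refine ⟨OrderIso.refl ℝ, fun _ _ => rfl, fun _ _ => rfl, ?_⟩
      simp only [insert_empty_eq, Finset.mem_singleton, exists_eq_left]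
      intro t h3 h4
      have : t = b := le_antisymm h4 h3
      subst this
      exact h1 t (by simp)
    set a := S.max' hne with ha
    have haS : a ∈ S := S.max'_mem hne
    have hle : ∀ s ∈ S, s ≤ a := fun s hs => S.le_max' s hs
    have hab : a < b := hb a haS
    obtain ⟨l, l1, l2⟩ := gap hg hp hab (h2 a (Finset.mem_insert_of_mem haS) b (by simp) hab (by
        intro c hc hac hcb
        rcases Finset.mem_insert.1 hc with rfl | hc
        · exact lt_irrefl _ hcb
        · exact absurd (hle c hc) (by linarith)))
      (h1 a (Finset.mem_insert_of_mem haS)) (h1 b (by simp))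
    have ka : k a = a := k2 a haS
    have kle : ∀ t, t ≤ a → l (k t) = k t := fun t ht => l1 _ (Or.inl (by
      rw [← ka]; exact k.monotone ht))
    have kge : ∀ t, a ≤ t → k t = t := fun t ht => k1 t (Or.inr fun s hs => (hle s hs).trans ht)
    refine ⟨k.trans l, ?_, ?_, ?_⟩
    · rintro t (ht | ht)
      · show l (k t) = t
        rw [kle t (ht a (Finset.mem_insert_of_mem haS))]
        exact k1 t (Or.inl fun s hs => ht s (Finset.mem_insert_of_mem hs))
      · show l (k t) = t
        have hbt : b ≤ t := ht b (by simp)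
        rw [kge t (by linarith)]
        exact l1 t (Or.inr hbt)
    · intro s hs
      show l (k s) = s
      rcases Finset.mem_insert.1 hs with rfl | hs
      · rw [kge _ hab.le]; exact l1 _ (Or.inr le_rfl)
      · rw [kle s (hle s hs), k2 s hs]
    · rintro t ⟨s, hs, hst⟩ ⟨s', hs', hst'⟩
      show _ = SignType.sign (g (l (k t)))
      rcases le_total t a with hta | hta
      · rw [kle t hta]
        refine k3 t ?_ ⟨a, haS, hta⟩
        rcases Finset.mem_insert.1 hs with rfl | hs
        · exact absurd hst (by linarith)
        · exact ⟨s, hs, hst⟩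
      · rw [kge t hta]
        refine l2 t ⟨hta, ?_⟩
        rcases Finset.mem_insert.1 hs' with rfl | hs'
        · exact hst'
        · exact (hst'.trans (hle _ hs')).trans hab.le

lemma straighten {p g : ℝ → ℝ} (hg : Continuous g) (hp : Continuous p) (R : Finset ℝ)
    (hR : ∀ s ∈ R, SignType.sign (p s) = SignType.sign (g s))
    (hm : ∀ a b, a < b → (∀ c ∈ R, a < c → ¬ c < b) → SameMono p g a b)
    (htop : ∃ B, ∀ t, B ≤ t → SignType.sign (p t) = SignType.sign (g t))
    (hbot : ∃ B, ∀ t, t ≤ B → SignType.sign (p t) = SignType.sign (g t)) :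
    ∃ k : ℝ ≃o ℝ, (∀ s ∈ R, k s = s) ∧ ∀ t, SignType.sign (p t) = SignType.sign (g (k t)) := by
  obtain ⟨B0, hB0⟩ := htop
  obtain ⟨A0, hA0⟩ := hbot
  obtain ⟨U, hU⟩ := R.bddAbove
  obtain ⟨V, hV⟩ := R.bddBelow
  set B := max B0 (max U 0)
  set A := min A0 (min V 0)
  have hBB : B0 ≤ B := le_max_left _ _
  have hAA : A ≤ A0 := min_le_left _ _
  have hUB : U ≤ B := (le_max_left _ _).trans (le_max_right _ _)
  have hAV : A ≤ V := (min_le_right _ _).trans (min_le_left _ _)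
  have hAB : A ≤ B := ((min_le_right _ _).trans (min_le_right _ _)).trans
    ((le_max_right _ _).trans (le_max_right _ _))
  have hle : ∀ s ∈ insert A (insert B R), A ≤ s ∧ s ≤ B := by
    intro s hs
    simp only [Finset.mem_insert] at hs
    rcases hs with rfl | rfl | hs
    · exact ⟨le_rfl, hAB⟩
    · exact ⟨hAB, le_rfl⟩
    · exact ⟨hAV.trans (hV hs), (hU hs).trans hUB⟩
  obtain ⟨k, k1, k2, k3⟩ := glue hg hp (insert A (insert B R))
    (by
      intro s hs
      simp only [Finset.mem_insert] at hs
      rcases hs with rfl | rfl | hs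
      · exact hA0 _ hAA
      · exact hB0 _ hBB
      · exact hR s hs)
    (by
      intro a _ b _ hab hc
      exact hm a b hab fun c hc' => hc c (by simp [hc']))
  refine ⟨k, fun s hs => k2 s (by simp [hs]), fun t => ?_⟩
  by_cases c1 : t ≤ A
  · rw [k1 t (Or.inl fun s hs => c1.trans (hle s hs).1)]
    exact hA0 t (c1.trans hAA)
  by_cases c2 : B ≤ t
  · rw [k1 t (Or.inr fun s hs => (hle s hs).2.trans c2)]
    exact hB0 t (hBB.trans c2)
  exact k3 t ⟨A, by simp, by linarith⟩ ⟨B, by simp, by linarith⟩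

lemma sign_const {p : ℝ → ℝ} (hp : Continuous p) {a b : ℝ} (hab : a ≤ b)
    (h : ∀ t ∈ Set.Icc a b, p t ≠ 0) : SignType.sign (p a) = SignType.sign (p b) := by
  have hA := h a ⟨le_rfl, hab⟩
  have hB := h b ⟨hab, le_rfl⟩
  rcases hA.lt_or_gt with h1 | h1 <;> rcases hB.lt_or_gt with h2 | h2
  · rw [sign_neg h1, sign_neg h2]
  · obtain ⟨z, hz, hz0⟩ := intermediate_value_Icc hab hp.continuousOn ⟨h1.le, h2.le⟩
    exact absurd hz0 (h z hz)
  · obtain ⟨z, hz, hz0⟩ := intermediate_value_Icc' hab hp.continuousOn ⟨h2.le, h1.le⟩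
    exact absurd hz0 (h z hz)
  · rw [sign_pos h1, sign_pos h2]

/-- a homeomorphism fixing the zeros of `p` preserves its signs -/
lemma fix_sign {p : ℝ → ℝ} (hp : Continuous p) (k : ℝ ≃o ℝ) (h : ∀ t, p t = 0 → k t = t) (t : ℝ) :
    SignType.sign (p t) = SignType.sign (p (k t)) := by
  rcases le_total t (k t) with c | c
  · by_cases h0 : p t = 0
    · rw [h t h0]
    · refine sign_const hp c fun s hs hs0 => h0 ?_
      have h1 := h s hs0
      have : k s ≤ k t := by rw [h1]; exact hs.2
      have : s = t := le_antisymm (k.le_iff_le.1 this) hs.1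
      rwa [← this]
  · by_cases h0 : p t = 0
    · rw [h t h0]
    · refine (sign_const hp c fun s hs hs0 => h0 ?_).symm
      have h1 := h s hs0
      have : k t ≤ k s := by rw [h1]; exact hs.1
      have : s = t := le_antisymm hs.2 (k.le_iff_le.1 this)
      rwa [← this]

lemma sign_top (p : ℝ[X]) (hd : 1 ≤ p.natDegree) :
    ∀ᶠ t in Filter.atTop, SignType.sign (p.eval t) = SignType.sign p.leadingCoeff := by
  have hdeg : 0 < p.degree := natDegree_pos_iff_degree_pos.1 hd
  have hp : p.leadingCoeff ≠ 0 := leadingCoeff_ne_zero.2 (by rintro rfl; simp at hd)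
  rcases hp.lt_or_gt with h | h
  · have := p.tendsto_atBot_of_leadingCoeff_nonpos hdeg h.le
    filter_upwards [this.eventually_lt_atBot 0] with t ht
    rw [sign_neg ht, sign_neg h]
  · have := p.tendsto_atTop_of_leadingCoeff_nonneg hdeg h.le
    filter_upwards [this.eventually_gt_atTop 0] with t ht
    rw [sign_pos ht, sign_pos h]

lemma sign_bot (p : ℝ[X]) (hd : 1 ≤ p.natDegree) :
    ∀ᶠ t in Filter.atBot, SignType.sign (p.eval t) =
      SignType.sign ((-1) ^ p.natDegree * p.leadingCoeff) := by
  have := sign_top (p.comp (-X)) (by rw [natDegree_comp]; simpa using hd)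
  have h2 := Filter.tendsto_neg_atBot_atTop.eventually this
  filter_upwards [h2] with t ht
  rw [comp_neg_X_leadingCoeff_eq] at ht
  simpa using ht

lemma poly_mono (p : ℝ[X]) {a b : ℝ} (h : ∀ t ∈ Set.Ioo a b, 0 < p.derivative.eval t) :
    StrictMonoOn (fun t => p.eval t) (Set.Icc a b) :=
  strictMonoOn_of_deriv_pos (convex_Icc a b) p.continuous.continuousOn (by
    intro x hx
    rw [interior_Icc] at hx
    rw [Polynomial.deriv]
    exact h x hx)

lemma poly_anti (p : ℝ[X]) {a b : ℝ} (h : ∀ t ∈ Set.Ioo a b, p.derivative.eval t < 0) :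
    StrictAntiOn (fun t => p.eval t) (Set.Icc a b) :=
  strictAntiOn_of_deriv_neg (convex_Icc a b) p.continuous.continuousOn (by
    intro x hx
    rw [interior_Icc] at hx
    rw [Polynomial.deriv]
    exact h x hx)

lemma step {ι : Type*} [Finite ι] (P Q : ι → ℝ[X]) (h : ℝ ≃o ℝ)
    (hs : ∀ i t, SignType.sign ((P i).eval t) = SignType.sign ((Q i).eval (h t)))
    (p q : ℝ[X]) (i0 : ι) (hp : P i0 = derivative p) (hq : Q i0 = derivative q)
    (hd : 1 ≤ p.natDegree) (hdq : p.natDegree = q.natDegree)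
    (hlc : SignType.sign p.leadingCoeff = SignType.sign q.leadingCoeff)
    (hroot : ∀ i, P i ≠ 0 → ∀ t, (P i).eval t = 0 →
      SignType.sign (p.eval t) = SignType.sign (q.eval (h t))) :
    ∃ h' : ℝ ≃o ℝ, (∀ i t, SignType.sign ((P i).eval t) = SignType.sign ((Q i).eval (h' t))) ∧
      ∀ t, SignType.sign (p.eval t) = SignType.sign (q.eval (h' t)) := by
  have hfin : (⋃ i, {t | P i ≠ 0 ∧ (P i).eval t = 0}).Finite := by
    refine Set.finite_iUnion fun i => ?_
    by_cases c : P i = 0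
    · simp [c]
    · refine (P i).roots.toFinset.finite_toSet.subset fun t ht => ?_
      simpa [c] using ht.2
  have hmem : ∀ t, t ∈ hfin.toFinset ↔ ∃ i, P i ≠ 0 ∧ (P i).eval t = 0 := by simp
  have hcont : Continuous fun t => q.eval (h t) := q.continuous.comp h.continuous
  have hp0 : P i0 ≠ 0 := by
    rw [hp]; intro hh
    have := derivative_eq_zero.1 hh
    omega
  obtain ⟨k, k1, k2⟩ := straighten (p := fun t => p.eval t) (g := fun t => q.eval (h t)) hcont
    p.continuous hfin.toFinset
    (by
      intro s hs'
      obtain ⟨i, hi, hi0⟩ := (hmem s).1 hs'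
      exact hroot i hi s hi0)
    (by
      intro a b hab hc
      have hne : ∀ t ∈ Set.Ioo a b, (derivative p).eval t ≠ 0 := fun t ht h0 =>
        hc t ((hmem t).2 ⟨i0, hp0, by rw [hp]; exact h0⟩) ht.1 ht.2
      have hsd : ∀ t, SignType.sign ((derivative p).eval t) =
          SignType.sign ((derivative q).eval (h t)) := by
        intro t; have := hs i0 t; rwa [hp, hq] at this
      have hcst : ∀ s ∈ Set.Ioo a b, ∀ t ∈ Set.Ioo a b, SignType.sign ((derivative p).eval s) =
          SignType.sign ((derivative p).eval t) := by
        intro s hs t ht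
        rcases le_total s t with c | c
        · exact sign_const (p := fun t => (derivative p).eval t) (derivative p).continuous c
            fun u hu => hne u ⟨hs.1.trans_le hu.1, hu.2.trans_lt ht.2⟩
        · exact (sign_const (p := fun t => (derivative p).eval t) (derivative p).continuous c
            fun u hu => hne u ⟨ht.1.trans_le hu.1, hu.2.trans_lt hs.2⟩).symm
      have hm : (a + b) / 2 ∈ Set.Ioo a b := ⟨by linarith, by linarith⟩
      have hpre : ∀ u ∈ Set.Ioo (h a) (h b), ∃ t ∈ Set.Ioo a b, h t = u := by
        intro u hu
        refine ⟨h.symm u, ⟨?_, ?_⟩, h.apply_symm_apply u⟩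
        · rw [h.lt_symm_apply]; exact hu.1
        · rw [h.symm_apply_lt]; exact hu.2
      have hmap : Set.MapsTo h (Set.Icc a b) (Set.Icc (h a) (h b)) := fun t ht =>
        ⟨h.monotone ht.1, h.monotone ht.2⟩
      rcases (hne _ hm).lt_or_gt with c | c
      · right
        have e : ∀ t ∈ Set.Ioo a b, SignType.sign ((derivative p).eval t) = -1 := fun t ht => by
          rw [hcst t ht _ hm, sign_neg c]
        refine ⟨poly_anti p fun t ht => sign_eq_neg_one_iff.1 (e t ht), ?_⟩
        have := poly_anti q (a := h a) (b := h b) (by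
          intro u hu
          obtain ⟨t, ht, rfl⟩ := hpre u hu
          rw [← sign_eq_neg_one_iff, ← hsd, e t ht])
        exact this.comp_strictMonoOn (h.strictMono.strictMonoOn _) hmap
      · left
        have e : ∀ t ∈ Set.Ioo a b, SignType.sign ((derivative p).eval t) = 1 := fun t ht => by
          rw [hcst t ht _ hm, sign_pos c]
        refine ⟨poly_mono p fun t ht => sign_eq_one_iff.1 (e t ht), ?_⟩
        have := poly_mono q (a := h a) (b := h b) (by
          intro u hu
          obtain ⟨t, ht, rfl⟩ := hpre u hu
          rw [← sign_eq_one_iff, ← hsd, e t ht])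
        exact this.comp (h.strictMono.strictMonoOn _) hmap)
    (by
      have h1 := sign_top p hd
      have h2 := h.tendsto_atTop.eventually (sign_top q (hdq ▸ hd))
      obtain ⟨B, hB⟩ := Filter.eventually_atTop.1 (h1.and h2)
      exact ⟨B, fun t ht => by rw [(hB t ht).1, (hB t ht).2, hlc]⟩)
    (by
      have h1 := sign_bot p hd
      have h2 := h.tendsto_atBot.eventually (sign_bot q (hdq ▸ hd))
      obtain ⟨B, hB⟩ := Filter.eventually_atBot.1 (h1.and h2)
      exact ⟨B, fun t ht => by rw [(hB t ht).1, (hB t ht).2, sign_mul, sign_mul, hlc, hdq]⟩)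
  refine ⟨k.trans h, fun i t => ?_, k2⟩
  show _ = SignType.sign ((Q i).eval (h (k t)))
  rw [← hs]
  by_cases c : P i = 0
  · simp [c]
  · exact fix_sign (p := fun t => (P i).eval t) (P i).continuous k
      (fun t ht => k1 t ((hmem t).2 ⟨i, c, ht⟩)) t

end CylDec

namespace CylDec
open Polynomial

section alg
variable {A : Type*} [CommRing A]

lemma pseudo (q : A[X]) (hq : 1 ≤ q.natDegree) (n : ℕ) : ∀ p : A[X], p.natDegree ≤ n →
    ∃ (k : ℕ) (s r : A[X]), C q.leadingCoeff ^ k * p = q * s + r ∧ r.natDegree < q.natDegree := by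
  induction n with
  | zero => intro p hp; exact ⟨0, 0, p, by simp, by omega⟩
  | succ n ih =>
    intro p hp
    by_cases c : p.natDegree < q.natDegree
    · exact ⟨0, 0, p, by simp, c⟩
    push Not at c
    set m := p.natDegree with hm
    set p1 := C q.leadingCoeff * p - q * (C p.leadingCoeff * X ^ (m - q.natDegree)) with hp1
    have hle : p1.natDegree ≤ m := by
      refine (natDegree_sub_le _ _).trans (max_le (natDegree_C_mul_le _ _) ?_)
      refine natDegree_mul_le.trans ?_
      have := natDegree_C_mul_X_pow_le p.leadingCoeff (m - q.natDegree)
      omega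
    have hc : p1.coeff m = 0 := by
      rw [hp1, coeff_sub, coeff_C_mul, mul_left_comm, coeff_C_mul]
      have : (q * X ^ (m - q.natDegree)).coeff m = q.leadingCoeff := by
        have := coeff_mul_X_pow q (m - q.natDegree) q.natDegree
        rwa [Nat.add_sub_cancel' c] at this
      rw [this, hm, coeff_natDegree]; ring
    have hlt : p1.natDegree < m := by
      refine lt_of_le_of_ne hle fun he => ?_
      rw [← he, coeff_natDegree, leadingCoeff_eq_zero] at hc
      rw [hc] at he; simp at he; omega
    obtain ⟨k, s, r, h1, h2⟩ := ih p1 (by omega)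
    refine ⟨k + 1, C q.leadingCoeff ^ k * (C p.leadingCoeff * X ^ (m - q.natDegree)) + s, r, ?_, h2⟩
    rw [hp1] at h1
    linear_combination h1

open Classical in
noncomputable def prem (p q : A[X]) : A[X] :=
  if hq : 1 ≤ q.natDegree then (pseudo q hq _ p le_rfl).choose_spec.choose_spec.choose else 0

lemma prem_spec (p q : A[X]) (hq : 1 ≤ q.natDegree) :
    (∃ (k : ℕ) (s : A[X]), C q.leadingCoeff ^ k * p = q * s + prem p q) ∧
      (prem p q).natDegree < q.natDegree := by
  have := (pseudo q hq _ p le_rfl).choose_spec.choose_spec.choose_spec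
  rw [prem, dif_pos hq]
  exact ⟨⟨_, _, this.1⟩, this.2⟩

def ClosedFrom (d : ℕ) (s : Finset A[X]) : Prop :=
  (∀ q ∈ s, d ≤ q.natDegree → derivative q ∈ s ∧ q.eraseLead ∈ s) ∧
  ∀ p ∈ s, ∀ q ∈ s, d ≤ q.natDegree → q.natDegree ≤ p.natDegree → prem p q ∈ s

lemma der_lt {q : A[X]} (h : 1 ≤ q.natDegree) : (derivative q).natDegree < q.natDegree :=
  natDegree_derivative_lt (by omega)

lemma er_lt {q : A[X]} (h : 1 ≤ q.natDegree) : q.eraseLead.natDegree < q.natDegree := by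
  have := q.eraseLead_natDegree_le
  omega

lemma closed_step (d : ℕ) (hd : 1 ≤ d) (s : Finset A[X]) (hs : ClosedFrom (d + 1) s) :
    ∃ s', s ⊆ s' ∧ ClosedFrom d s' := by
  classical
  set D := s.filter (fun q => q.natDegree = d) with hD
  set s' := s ∪ (D.image derivative ∪ D.image eraseLead ∪ (s ×ˢ D).image (fun x => prem x.1 x.2))
    with hs'
  have hnew : ∀ q ∈ s', d ≤ q.natDegree → q ∈ s := by
    intro q hq hdq
    simp only [hs', Finset.mem_union, Finset.mem_image, hD, Finset.mem_filter, Finset.mem_product,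
      Prod.exists] at hq
    rcases hq with h | ((⟨u, ⟨h1, h2⟩, rfl⟩ | ⟨u, ⟨h1, h2⟩, rfl⟩) | ⟨u, v, ⟨h1, h2, h3⟩, rfl⟩)
    · exact h
    · have := der_lt (q := u) (by omega); omega
    · have := er_lt (q := u) (by omega); omega
    · have := (prem_spec u v (by omega)).2; omega
  refine ⟨s', Finset.subset_union_left, ?_, ?_⟩
  · intro q hq hdq
    have hqs := hnew q hq hdq
    rcases hdq.eq_or_lt with h | h
    · have : q ∈ D := by simp [hD, hqs, h]
      simp only [hs', Finset.mem_union, Finset.mem_image]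
      exact ⟨Or.inr (Or.inl (Or.inl ⟨q, this, rfl⟩)), Or.inr (Or.inl (Or.inr ⟨q, this, rfl⟩))⟩
    · exact ⟨Finset.mem_union_left _ (hs.1 q hqs h).1, Finset.mem_union_left _ (hs.1 q hqs h).2⟩
  · intro p hp q hq hdq hqp
    have hqs := hnew q hq hdq
    have hps := hnew p hp (hdq.trans hqp)
    rcases hdq.eq_or_lt with h | h
    · have : q ∈ D := by simp [hD, hqs, h]
      simp only [hs', Finset.mem_union, Finset.mem_image]
      exact Or.inr (Or.inr ⟨(p, q), Finset.mem_product.2 ⟨hps, this⟩, rfl⟩)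
    · exact Finset.mem_union_left _ (hs.2 p hps q hqs h hqp)

lemma closed_exists (s : Finset A[X]) : ∃ s', s ⊆ s' ∧ ClosedFrom 1 s' := by
  have key : ∀ d : ℕ, ∀ s : Finset A[X], ClosedFrom (d + 1) s → ∃ s', s ⊆ s' ∧ ClosedFrom 1 s' := by
    intro d
    induction d with
    | zero => exact fun s hs => ⟨s, Finset.Subset.refl _, hs⟩
    | succ d ih =>
      intro s hs
      obtain ⟨s1, h1, h2⟩ := closed_step (d + 1) (by omega) s hs
      obtain ⟨s2, h3, h4⟩ := ih s1 h2
      exact ⟨s2, h1.trans h3, h4⟩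
  have hle : ∀ q ∈ s, q.natDegree ≤ s.sup natDegree := fun q hq => Finset.le_sup (f := natDegree) hq
  refine key (s.sup natDegree) s ⟨fun q hq h => ?_, fun p _ q hq h => ?_⟩
  · have := hle q hq; omega
  · have := hle q hq; omega

lemma map_erase (f : A →+* ℝ) (q : A[X]) (h : f q.leadingCoeff = 0) :
    q.eraseLead.map f = q.map f := by
  have := congrArg (Polynomial.map f) q.eraseLead_add_monomial_natDegree_leadingCoeff
  rw [Polynomial.map_add, map_monomial, h, monomial_zero_right, add_zero] at this
  exact this

/-- sign of `p` at the roots of members of `s` -/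
lemma root_sign (f g : A →+* ℝ) (s : Finset A[X]) (p : A[X]) (h : ℝ ≃o ℝ)
    (hlc : ∀ q ∈ s, SignType.sign (f q.leadingCoeff) = SignType.sign (g q.leadingCoeff))
    (hs : ∀ q ∈ s, ∀ t, SignType.sign ((q.map f).eval t) = SignType.sign ((q.map g).eval (h t)))
    (hc : ∀ q ∈ s, 1 ≤ q.natDegree → q.eraseLead ∈ s ∧ prem p q ∈ s) (n : ℕ) :
    ∀ q ∈ s, q.natDegree ≤ n → q.map f ≠ 0 → ∀ t, (q.map f).eval t = 0 →
      SignType.sign ((p.map f).eval t) = SignType.sign ((p.map g).eval (h t)) := by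
  have const : ∀ q : A[X], q.natDegree = 0 → q.map f ≠ 0 → ∀ t, (q.map f).eval t ≠ 0 := by
    intro q hd h0 t
    rw [eq_C_of_natDegree_eq_zero hd] at h0 ⊢
    simpa using h0
  induction n with
  | zero => intro q _ hd h0 t ht; exact absurd ht (const q (by omega) h0 t)
  | succ n ih =>
    intro q hq hd h0 t ht
    by_cases hd1 : q.natDegree = 0
    · exact absurd ht (const q hd1 h0 t)
    have hd1 : 1 ≤ q.natDegree := by omega
    by_cases c : f q.leadingCoeff = 0
    · have := map_erase f q c
      have hl := er_lt hd1
      exact ih q.eraseLead (hc q hq hd1).1 (by omega) (by rwa [this]) t (by rwa [this])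
    · obtain ⟨⟨k, u, hk⟩, _⟩ := prem_spec p q hd1
      have hg : (q.map g).eval (h t) = 0 := by
        rw [← sign_eq_zero_iff, ← hs q hq, ht, sign_zero]
      have ef := congrArg (fun v => (v.map f).eval t) hk
      have eg := congrArg (fun v => (v.map g).eval (h t)) hk
      simp only [Polynomial.map_mul, Polynomial.map_pow, map_C, Polynomial.map_add, eval_add,
        eval_mul, eval_pow, eval_C, ht, hg, zero_mul, zero_add] at ef eg
      have e := hs _ (hc q hq hd1).2 t
      rw [← ef, ← eg, sign_mul, sign_mul, sign_pow, sign_pow, hlc q hq] at e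
      have hne : SignType.sign (g q.leadingCoeff) ^ k ≠ 0 := by
        rw [← hlc q hq]
        exact pow_ne_zero _ (by rwa [Ne, sign_eq_zero_iff])
      exact mul_left_cancel₀ hne e

lemma main_alg (f g : A →+* ℝ) (s : Finset A[X]) : ClosedFrom 1 s →
    (∀ q ∈ s, SignType.sign (f q.leadingCoeff) = SignType.sign (g q.leadingCoeff)) →
    ∃ h : ℝ ≃o ℝ, ∀ q ∈ s, ∀ t,
      SignType.sign ((q.map f).eval t) = SignType.sign ((q.map g).eval (h t)) := by
  classical
  refine Finset.induction_on_max_value (motive := fun s : Finset A[X] => ClosedFrom 1 s →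
    (∀ q ∈ s, SignType.sign (f q.leadingCoeff) = SignType.sign (g q.leadingCoeff)) →
    ∃ h : ℝ ≃o ℝ, ∀ q ∈ s, ∀ t,
      SignType.sign ((q.map f).eval t) = SignType.sign ((q.map g).eval (h t))) natDegree s ?_ ?_
  · exact fun _ _ => ⟨OrderIso.refl ℝ, by simp⟩
  · intro a s has hmax ih hcl hlc
    have hrem : ∀ u ∈ insert a s, u.natDegree < a.natDegree → u ∈ s := by
      intro u hu hlt
      rcases Finset.mem_insert.1 hu with rfl | hu
      · omega
      · exact hu
    have hlc' : ∀ q ∈ s, SignType.sign (f q.leadingCoeff) = SignType.sign (g q.leadingCoeff) :=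
      fun q hq => hlc q (Finset.mem_insert_of_mem hq)
    have hcl' : ClosedFrom 1 s := by
      refine ⟨fun q hq hd => ?_, fun p hp q hq hd hqp => ?_⟩
      · have := hcl.1 q (Finset.mem_insert_of_mem hq) hd
        have h1 := hmax q hq
        exact ⟨hrem _ this.1 ((der_lt hd).trans_le h1), hrem _ this.2 ((er_lt hd).trans_le h1)⟩
      · have := hcl.2 p (Finset.mem_insert_of_mem hp) q (Finset.mem_insert_of_mem hq) hd hqp
        exact hrem _ this ((prem_spec p q hd).2.trans_le (hmax q hq))
    obtain ⟨h, hh⟩ := ih hcl' hlc'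
    have ha : a ∈ insert a s := Finset.mem_insert_self a s
    by_cases hd : a.natDegree = 0
    · refine ⟨h, fun q hq t => ?_⟩
      rcases Finset.mem_insert.1 hq with rfl | hq
      · have := hlc q ha
        rw [leadingCoeff, hd] at this
        rw [eq_C_of_natDegree_eq_zero hd]
        simpa using this
      · exact hh q hq t
    have hd : 1 ≤ a.natDegree := by omega
    have hder := hrem _ (hcl.1 a ha hd).1 (der_lt hd)
    have her := hrem _ (hcl.1 a ha hd).2 (er_lt hd)
    by_cases c : f a.leadingCoeff = 0
    · have c' : g a.leadingCoeff = 0 := by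
        rw [← sign_eq_zero_iff, ← hlc a ha, c, sign_zero]
      refine ⟨h, fun q hq t => ?_⟩
      rcases Finset.mem_insert.1 hq with rfl | hq
      · rw [← map_erase f q c, ← map_erase g q c']
        exact hh _ her t
      · exact hh q hq t
    have c' : g a.leadingCoeff ≠ 0 := by
      intro hg
      have := hlc a ha
      rw [hg, sign_zero, sign_eq_zero_iff] at this
      exact c this
    have df := natDegree_map_of_leadingCoeff_ne_zero f c
    have dg := natDegree_map_of_leadingCoeff_ne_zero g c'
    obtain ⟨h', h1, h2⟩ := step (ι := s) (fun i => i.1.map f) (fun i => i.1.map g) h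
      (fun i t => hh i.1 i.2 t) (a.map f) (a.map g) ⟨derivative a, hder⟩ (by simp [derivative_map])
      (by simp [derivative_map]) (by omega) (by omega)
      (by rw [leadingCoeff_map_of_leadingCoeff_ne_zero f c,
            leadingCoeff_map_of_leadingCoeff_ne_zero g c']; exact hlc a ha)
      (fun i hi t ht => root_sign f g s a h hlc' hh
        (fun q hq hdq => ⟨(hcl'.1 q hq hdq).2,
          hrem _ (hcl.2 a ha q (Finset.mem_insert_of_mem hq) hdq (hmax q hq))
            ((prem_spec a q hdq).2.trans_le (hmax q hq))⟩) _ i.1 i.2 le_rfl hi t ht)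
    refine ⟨h', fun q hq t => ?_⟩
    rcases Finset.mem_insert.1 hq with rfl | hq
    · exact h2 t
    · exact h1 ⟨q, hq⟩ t

end alg
end CylDec

namespace CylDec
open Polynomial

section fiber
variable {ι : Type*} (P : ι → ℝ[X])

def DerClosed : Prop := ∀ i, derivative (P i) = 0 ∨ ∃ i', P i' = derivative (P i)

def RootSet : Set ℝ := {t | ∃ i, P i ≠ 0 ∧ (P i).eval t = 0}

lemma rootSet_finite [Finite ι] : (RootSet P).Finite := by
  have : RootSet P = ⋃ i, {t | P i ≠ 0 ∧ (P i).eval t = 0} := by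
    ext t; simp [RootSet]
  rw [this]
  refine Set.finite_iUnion fun i => ?_
  by_cases c : P i = 0
  · simp [c]
  · refine (P i).roots.toFinset.finite_toSet.subset fun t ht => ?_
    simpa [c] using ht.2

variable {P}

lemma thom (hP : DerClosed P) {a b : ℝ}
    (h : ∀ i, SignType.sign ((P i).eval a) = SignType.sign ((P i).eval b)) (n : ℕ) :
    ∀ i, (P i).natDegree ≤ n → ∀ c ∈ Set.Icc a b,
      SignType.sign ((P i).eval c) = SignType.sign ((P i).eval a) := by
  have const : ∀ i, (P i).natDegree = 0 → ∀ c, SignType.sign ((P i).eval c) =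
      SignType.sign ((P i).eval a) := by
    intro i hi c
    rw [eq_C_of_natDegree_eq_zero hi]; simp
  induction n with
  | zero => intro i hi c _; exact const i (by omega) c
  | succ n ih =>
    intro i hi c hc
    rcases hP i with h0 | ⟨i', hi'⟩
    · exact const i (derivative_eq_zero.1 h0) c
    by_cases hd : (P i).natDegree = 0
    · exact const i hd c
    have hlt := der_lt (q := P i) (by omega)
    have hs := ih i' (by rw [hi']; omega)
    rw [hi'] at hs
    have hab : a ≤ b := hc.1.trans hc.2
    have hA : a ∈ Set.Icc a b := ⟨le_rfl, hab⟩
    have hB : b ∈ Set.Icc a b := ⟨hab, le_rfl⟩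
    rcases le_total 0 ((derivative (P i)).eval a) with h1 | h1
    · have hm : MonotoneOn (fun t => (P i).eval t) (Set.Icc a b) := by
        refine monotoneOn_of_deriv_nonneg (convex_Icc a b) (P i).continuous.continuousOn
          (P i).differentiable.differentiableOn ?_
        intro t ht
        rw [interior_Icc] at ht
        rw [Polynomial.deriv, ← sign_nonneg_iff, hs t (Set.Ioo_subset_Icc_self ht), sign_nonneg_iff]
        exact h1
      refine le_antisymm ?_ (SignType.sign.monotone (hm hA hc hc.1))
      rw [h i]; exact SignType.sign.monotone (hm hc hB hc.2)
    · have hm : AntitoneOn (fun t => (P i).eval t) (Set.Icc a b) := by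
        refine antitoneOn_of_deriv_nonpos (convex_Icc a b) (P i).continuous.continuousOn
          (P i).differentiable.differentiableOn ?_
        intro t ht
        rw [interior_Icc] at ht
        rw [Polynomial.deriv, ← sign_nonpos_iff, hs t (Set.Ioo_subset_Icc_self ht), sign_nonpos_iff]
        exact h1
      refine le_antisymm (SignType.sign.monotone (hm hA hc hc.1)) ?_
      rw [h i]; exact SignType.sign.monotone (hm hc hB hc.2)

lemma graph_unique (hP : DerClosed P) {r t : ℝ} (hr : r ∈ RootSet P)
    (h : ∀ i, SignType.sign ((P i).eval t) = SignType.sign ((P i).eval r)) : t = r := by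
  obtain ⟨i, hi, hi0⟩ := hr
  have inf : ∀ a b : ℝ, a < b → (∀ i, SignType.sign ((P i).eval a) = SignType.sign ((P i).eval b)) →
      (P i).eval a = 0 → False := by
    intro a b hab h h0
    refine hi (eq_zero_of_infinite_isRoot _ ((Set.Icc_infinite hab).mono fun c hc => ?_))
    have := thom hP h _ i le_rfl c hc
    rw [h0, sign_zero, sign_eq_zero_iff] at this
    exact this
  rcases lt_trichotomy t r with c | c | c
  · exfalso
    refine inf t r c h ?_
    rw [← sign_eq_zero_iff, h, hi0, sign_zero]
  · exact c
  · exact (inf r t c (fun i => (h i).symm) hi0).elim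

lemma simple_root (hP : DerClosed P) {r : ℝ} (hr : r ∈ RootSet P) :
    ∃ i, (P i).eval r = 0 ∧ (derivative (P i)).eval r ≠ 0 := by
  classical
  obtain ⟨i, hi, hi0⟩ := hr
  have key : ∀ n, ∀ i, (P i).natDegree ≤ n → P i ≠ 0 → (P i).eval r = 0 →
      ∃ i, (P i).eval r = 0 ∧ (derivative (P i)).eval r ≠ 0 := by
    intro n
    induction n with
    | zero =>
      intro i hd h0 h1
      rw [eq_C_of_natDegree_eq_zero (by omega : (P i).natDegree = 0)] at h0 h1
      simp at h0 h1; exact absurd h1 h0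
    | succ n ih =>
      intro i hd h0 h1
      by_cases c : (derivative (P i)).eval r = 0
      · have hd0 : (P i).natDegree ≠ 0 := by
          intro hz
          rw [eq_C_of_natDegree_eq_zero hz] at h0 h1
          simp at h0 h1; exact absurd h1 h0
        have hne : derivative (P i) ≠ 0 := fun hz => hd0 (derivative_eq_zero.1 hz)
        rcases hP i with hz | ⟨i', hi'⟩
        · exact absurd hz hne
        have := der_lt (q := P i) (by omega)
        exact ih i' (by rw [hi']; omega) (by rwa [hi']) (by rwa [hi'])
      · exact ⟨i, h1, c⟩
  exact key _ i le_rfl hi hi0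

lemma sign_change (p : ℝ[X]) {r : ℝ} (h0 : p.eval r = 0) (h1 : (derivative p).eval r ≠ 0) {δ : ℝ}
    (hδ : 0 < δ) : ∃ η, 0 < η ∧ η ≤ δ ∧ p.eval (r - η) * p.eval (r + η) < 0 := by
  have pos : ∀ p : ℝ[X], p.eval r = 0 → 0 < (derivative p).eval r →
      ∃ η, 0 < η ∧ η ≤ δ ∧ p.eval (r - η) * p.eval (r + η) < 0 := by
    intro p h0 h1
    have : ∀ᶠ t in nhds r, 0 < (derivative p).eval t :=
      (derivative p).continuous.continuousAt.eventually_const_lt h1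
    obtain ⟨ε, hε, hb⟩ := Metric.eventually_nhds_iff.1 this
    have hη : 0 < min ε δ := lt_min hε hδ
    refine ⟨min ε δ, hη, min_le_right _ _, ?_⟩
    have hm := poly_mono p (a := r - min ε δ) (b := r + min ε δ) (by
      intro t ht
      apply hb
      rw [Real.dist_eq, abs_lt]
      have := min_le_left ε δ
      constructor <;> linarith [ht.1, ht.2])
    have a1 := hm (a := r - min ε δ) (b := r) ⟨le_rfl, by linarith⟩ ⟨by linarith, by linarith⟩
      (by linarith)
    have a2 := hm (a := r) (b := r + min ε δ) ⟨by linarith, by linarith⟩ ⟨by linarith, le_rfl⟩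
      (by linarith)
    simp only [h0] at a1 a2
    exact mul_neg_of_neg_of_pos a1 a2
  rcases h1.lt_or_gt with c | c
  · obtain ⟨η, e1, e2, e3⟩ := pos (-p) (by simp [h0]) (by simpa using c)
    exact ⟨η, e1, e2, by simpa using e3⟩
  · exact pos p h0 c

def Band {μ : ℕ} (a : Fin μ → ℝ) (j : Fin (μ + 1)) : Set ℝ :=
  {t | (∀ h : 0 < j.1, a ⟨j.1 - 1, by have := j.isLt; omega⟩ < t) ∧ (∀ h : j.1 < μ, t < a ⟨j.1, h⟩)}

lemma band_nonempty {μ : ℕ} {a : Fin μ → ℝ} (ha : StrictMono a) (j : Fin (μ + 1)) :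
    (Band a j).Nonempty := by
  by_cases c : 0 < j.1
  · by_cases d : j.1 < μ
    · have : a ⟨j.1 - 1, by omega⟩ < a ⟨j.1, d⟩ := ha (by show j.1 - 1 < j.1; omega)
      obtain ⟨m, h1, h2⟩ := exists_between this
      exact ⟨m, fun _ => h1, fun _ => h2⟩
    · exact ⟨a ⟨j.1 - 1, by have := j.isLt; omega⟩ + 1, fun _ => by linarith, fun h => absurd h d⟩
  · by_cases d : j.1 < μ
    · exact ⟨a ⟨j.1, d⟩ - 1, fun h => absurd h c, fun _ => by linarith⟩
    · exact ⟨0, fun h => absurd h c, fun h => absurd h d⟩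

lemma band_noroot {μ : ℕ} {a : Fin μ → ℝ} (ha : StrictMono a) (j : Fin (μ + 1)) (i : Fin μ) :
    a i ∉ Band a j := by
  rintro ⟨h1, h2⟩
  by_cases c : j.1 ≤ i.1
  · have := ha.lt_iff_lt.1 (h2 (by omega))
    rw [Fin.lt_def] at this; simp at this; omega
  · have := ha.lt_iff_lt.1 (h1 (by omega))
    rw [Fin.lt_def] at this; simp at this; omega

lemma band_sign_le {μ : ℕ} {a : Fin μ → ℝ} (ha : StrictMono a) (hr : Set.range a = RootSet P)
    (j : Fin (μ + 1)) {s t : ℝ} (hs : s ∈ Band a j) (ht : t ∈ Band a j) (hst : s ≤ t) (i : ι) :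
    SignType.sign ((P i).eval s) = SignType.sign ((P i).eval t) := by
  by_cases c : P i = 0
  · simp [c]
  refine sign_const (p := fun t => (P i).eval t) (P i).continuous hst fun u hu h0 => ?_
  have : u ∈ RootSet P := ⟨i, c, h0⟩
  rw [← hr] at this
  obtain ⟨l, rfl⟩ := this
  exact band_noroot ha j l ⟨fun h => (hs.1 h).trans_le hu.1, fun h => hu.2.trans_lt (ht.2 h)⟩

lemma band_sign {μ : ℕ} {a : Fin μ → ℝ} (ha : StrictMono a) (hr : Set.range a = RootSet P)
    (j : Fin (μ + 1)) {s t : ℝ} (hs : s ∈ Band a j) (ht : t ∈ Band a j) (i : ι) :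
    SignType.sign ((P i).eval s) = SignType.sign ((P i).eval t) := by
  rcases le_total s t with c | c
  · exact band_sign_le ha hr j hs ht c i
  · exact (band_sign_le ha hr j ht hs c i).symm

lemma band_unique (hP : DerClosed P) {μ : ℕ} {a : Fin μ → ℝ} (hr : Set.range a = RootSet P)
    (j : Fin (μ + 1)) {s t : ℝ} (hs : s ∈ Band a j)
    (h : ∀ i, SignType.sign ((P i).eval t) = SignType.sign ((P i).eval s)) : t ∈ Band a j := by
  have hmem : ∀ l, a l ∈ RootSet P := fun l => by rw [← hr]; exact ⟨l, rfl⟩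
  refine ⟨fun h1 => ?_, fun h1 => ?_⟩
  · by_contra hc
    push Not at hc
    have hlt := hs.1 h1
    refine hlt.ne' (graph_unique hP (hmem _) fun i => ?_)
    rw [thom hP h _ i le_rfl _ ⟨hc, hlt.le⟩, h]
  · by_contra hc
    push Not at hc
    have hlt := hs.2 h1
    refine hlt.ne (graph_unique hP (hmem _) fun i => ?_)
    rw [thom hP (fun i => (h i).symm) _ i le_rfl _ ⟨hlt.le, hc⟩]

end fiber

lemma realSign_eq (r : ℝ) : Real.sign r = ((SignType.sign r : SignType) : ℝ) := by
  rcases lt_trichotomy r 0 with h | h | h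
  · rw [Real.sign_of_neg h, sign_neg h]; simp
  · rw [h]; simp
  · rw [Real.sign_of_pos h, sign_pos h]; simp

lemma realSign_iff (r s : ℝ) : Real.sign r = Real.sign s ↔ SignType.sign r = SignType.sign s := by
  rw [realSign_eq, realSign_eq]
  constructor
  · intro h
    generalize SignType.sign r = u at *
    generalize SignType.sign s = v at *
    cases u <;> cases v <;> first | rfl | (exfalso; norm_num at h)
  · intro h; rw [h]

lemma strictMono_eq {μ : ℕ} {σ : Fin μ → Fin μ} (h : StrictMono σ) (j : Fin μ) : σ j = j := by
  have h1 : ∀ j, j ≤ σ j := fun j => h.le_apply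
  have hs : Function.Surjective σ := Finite.surjective_of_injective h.injective
  let e : Fin μ ≃o Fin μ := h.orderIsoOfSurjective σ hs
  have h4 : j ≤ e.symm j := e.symm.strictMono.le_apply
  have h5 : e j ≤ j := by rw [← e.le_symm_apply]; exact h4
  exact le_antisymm h5 (h1 j)

end CylDec

namespace CylDec
open Polynomial

noncomputable def ev (E : Subring (X → ℝ)) (x : X) : E →+* ℝ :=
  (Pi.evalRingHom (fun _ : X => ℝ) x).comp E.subtype

lemma polyEval_eq (E : Subring (X → ℝ)) (p : Polynomial E) (x : X) (t : ℝ) :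
    polyEval E p x t = (p.map (ev E x)).eval t := rfl

lemma polyEval_cont (E : Subring (X → ℝ)) (hE : ∀ f ∈ E, Continuous f) (p : Polynomial E) (t : ℝ) :
    Continuous fun x => polyEval E p x t := by
  simp only [polyEval, eval_map, eval₂_eq_sum_range]
  refine continuous_finsetSum _ fun i _ => Continuous.mul ?_ continuous_const
  exact hE _ (p.coeff i).2

lemma piece_isESet (E : Subring (X → ℝ)) {N : ℕ} (c : Fin N → E) (ε : Fin N → SignType) :
    IsESet E {x | ∀ n, SignType.sign (ev E x (c n)) = ε n} := by
  classical
  refine ⟨1, fun _ => _, fun _ => ?_, (Set.iUnion_const _).symm⟩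
  refine ⟨((∑ n, if ε n = 0 then c n * c n else 0 : E) : X → ℝ), Subtype.property _, N,
    fun n => ((if ε n = 0 then 1 else if ε n = 1 then c n else - c n : E) : X → ℝ),
    fun n => Subtype.property _, ?_⟩
  ext x
  have e1 : ∀ e : E, (e : X → ℝ) x = ev E x e := fun _ => rfl
  simp only [Set.mem_ofPred_eq, e1, map_sum]
  have e2 : (∑ n, ev E x (if ε n = 0 then c n * c n else 0) = 0) ↔
      ∀ n, ε n = 0 → ev E x (c n) = 0 := by
    rw [Finset.sum_eq_zero_iff_of_nonneg]
    · refine ⟨fun h n hn => ?_, fun h n _ => ?_⟩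
      · have := h n (Finset.mem_univ n)
        simpa [hn] using this
      · split_ifs with hn
        · simp [h n hn]
        · simp
    · intro n _
      split_ifs
      · rw [map_mul]; exact mul_self_nonneg _
      · simp
  rw [e2, ← forall_and]
  refine forall_congr' fun n => ?_
  generalize ε n = u
  cases u
  · simp
  · simpa using sign_eq_neg_one_iff
  · simpa using sign_eq_one_iff

section comp
variable (E : Subring (X → ℝ)) {N : ℕ} (Φ : Fin N → Polynomial E)

noncomputable def fib (x : X) (n : Fin N) : ℝ[X] := (Φ n).map (ev E x)

variable {E Φ}

lemma fib_zero {x y : X} (h : ℝ ≃o ℝ)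
    (hh : ∀ n t, SignType.sign ((fib E Φ x n).eval t) = SignType.sign ((fib E Φ y n).eval (h t)))
    (n : Fin N) : fib E Φ x n = 0 ↔ fib E Φ y n = 0 := by
  constructor
  · intro h0
    refine Polynomial.funext fun t => ?_
    have := hh n (h.symm t)
    rw [h.apply_symm_apply, h0] at this
    simp only [eval_zero, sign_zero] at this ⊢
    exact sign_eq_zero_iff.1 this.symm
  · intro h0
    refine Polynomial.funext fun t => ?_
    have := hh n t
    rw [h0] at this
    simp only [eval_zero, sign_zero] at this ⊢
    exact sign_eq_zero_iff.1 this

lemma rootSet_map {x y : X} (h : ℝ ≃o ℝ)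
    (hh : ∀ n t, SignType.sign ((fib E Φ x n).eval t) = SignType.sign ((fib E Φ y n).eval (h t)))
    (t : ℝ) : h t ∈ RootSet (fib E Φ y) ↔ t ∈ RootSet (fib E Φ x) := by
  refine exists_congr fun n => ?_
  rw [Ne, Ne, fib_zero h hh n, ← sign_eq_zero_iff (a := (fib E Φ y n).eval (h t)),
    ← sign_eq_zero_iff (a := (fib E Φ x n).eval t), hh n t]

lemma near_root (hE : ∀ f ∈ E, Continuous f) {x : X} (hP : DerClosed (fib E Φ x)) {r : ℝ}
    (hr : r ∈ RootSet (fib E Φ x)) {δ : ℝ} (hδ : 0 < δ) :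
    ∀ᶠ y in nhds x, ∃ t ∈ RootSet (fib E Φ y), r - δ < t ∧ t < r + δ := by
  obtain ⟨n, h0, h1⟩ := simple_root hP hr
  obtain ⟨η, e1, e2, e3⟩ := sign_change _ h0 h1 hδ
  have hc : Continuous fun y => (fib E Φ y n).eval (r - η) * (fib E Φ y n).eval (r + η) :=
    (polyEval_cont E hE (Φ n) (r - η)).mul (polyEval_cont E hE (Φ n) (r + η))
  filter_upwards [hc.continuousAt.eventually_lt_const e3] with y hy
  have hne : fib E Φ y n ≠ 0 := by
    intro hz; rw [hz] at hy; simp at hy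
  have hle : r - η ≤ r + η := by linarith
  rcases mul_neg_iff.1 hy with ⟨a, b⟩ | ⟨a, b⟩
  · obtain ⟨t, ht, ht0⟩ := intermediate_value_Ioo' hle (fib E Φ y n).continuous.continuousOn ⟨b, a⟩
    exact ⟨t, ⟨n, hne, ht0⟩, by linarith [ht.1], by linarith [ht.2]⟩
  · obtain ⟨t, ht, ht0⟩ := intermediate_value_Ioo hle (fib E Φ y n).continuous.continuousOn ⟨a, b⟩
    exact ⟨t, ⟨n, hne, ht0⟩, by linarith [ht.1], by linarith [ht.2]⟩

lemma roots_continuous (hE : ∀ f ∈ E, Continuous f) (hP : ∀ x, DerClosed (fib E Φ x))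
    {A : Set X} {μ : ℕ} (ξ : Fin μ → X → ℝ) (hm : ∀ x ∈ A, StrictMono fun j => ξ j x)
    (hr : ∀ x ∈ A, Set.range (fun j => ξ j x) = RootSet (fib E Φ x)) (j : Fin μ) :
    ContinuousOn (ξ j) A := by
  intro x hx
  rw [ContinuousWithinAt, Metric.tendsto_nhds]
  intro ε hε
  have hδ : ∃ δ, 0 < δ ∧ δ ≤ ε ∧ ∀ i i' : Fin μ, i < i' → ξ i x + δ ≤ ξ i' x - δ := by
    have h1 : ∀ᶠ δ in nhdsWithin (0 : ℝ) (Set.Ioi 0), ∀ i i' : Fin μ, i < i' →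
        ξ i x + δ ≤ ξ i' x - δ := by
      rw [Filter.eventually_all]; intro i
      rw [Filter.eventually_all]; intro i'
      by_cases c : i < i'
      · have hlt : 0 < (ξ i' x - ξ i x) / 2 := by have := hm x hx c; simp only at this; linarith
        filter_upwards [Ioo_mem_nhdsGT hlt] with δ hd _
        linarith [hd.2]
      · filter_upwards with δ h using absurd h c
    obtain ⟨δ, h, hd⟩ := (h1.and (Ioo_mem_nhdsGT hε)).exists
    exact ⟨δ, hd.1, hd.2.le, h⟩
  obtain ⟨δ, d1, d2, d3⟩ := hδ
  have hev : ∀ᶠ y in nhdsWithin x A, ∀ i : Fin μ,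
      ∃ t ∈ RootSet (fib E Φ y), ξ i x - δ < t ∧ t < ξ i x + δ := by
    rw [Filter.eventually_all]; intro i
    refine Filter.Eventually.filter_mono nhdsWithin_le_nhds (near_root hE (hP x) ?_ d1)
    rw [← hr x hx]; exact ⟨i, rfl⟩
  filter_upwards [hev, self_mem_nhdsWithin] with y hy hyA
  have : ∀ i, ∃ l, ξ i x - δ < ξ l y ∧ ξ l y < ξ i x + δ := by
    intro i
    obtain ⟨t, ht, h1, h2⟩ := hy i
    rw [← hr y hyA] at ht
    obtain ⟨l, rfl⟩ := ht
    exact ⟨l, h1, h2⟩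
  choose σ hσ using this
  have hs : StrictMono σ := by
    intro i i' hi
    refine (hm y hyA).lt_iff_lt.1 ?_
    have := d3 i i' hi
    show ξ (σ i) y < ξ (σ i') y
    linarith [(hσ i).2, (hσ i').1]
  have h1 := hσ j
  rw [strictMono_eq hs j] at h1
  rw [Real.dist_eq, abs_lt]
  constructor <;> linarith [h1.1, h1.2]

lemma component (hE : ∀ f ∈ E, Continuous f) (hP : ∀ x, DerClosed (fib E Φ x))
    {C : Set X} {x₀ : X} (hx₀ : x₀ ∈ C)
    (hC : ∀ x ∈ C, ∃ h : ℝ ≃o ℝ, ∀ n t, SignType.sign ((fib E Φ x₀ n).eval t) =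
      SignType.sign ((fib E Φ x n).eval (h t))) :
    ∃ (μ : ℕ) (ξ : Fin μ → X → ℝ),
      (∀ j : Fin μ, ContinuousOn (ξ j) C) ∧
      (∀ x ∈ C, ∀ j j' : Fin μ, j < j' → ξ j x < ξ j' x) ∧
      (∀ n : Fin N, ∀ j : Fin μ, ∃ ε : ℝ,
        ∀ q ∈ cellGraph C ξ j, Real.sign (polyEval E (Φ n) q.1 q.2) = ε) ∧
      (∀ n : Fin N, ∀ j : Fin (μ + 1), ∃ ε : ℝ,
        ∀ q ∈ cellBand C ξ j, Real.sign (polyEval E (Φ n) q.1 q.2) = ε) ∧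
      (∀ j : Fin μ, ∃ ε : Fin N → ℝ, (∀ n, ε n = -1 ∨ ε n = 0 ∨ ε n = 1) ∧
        cellGraph C ξ j =
          {q : X × ℝ | q.1 ∈ C ∧ ∀ n, Real.sign (polyEval E (Φ n) q.1 q.2) = ε n}) ∧
      (∀ j : Fin (μ + 1), ∃ ε : Fin N → ℝ, (∀ n, ε n = -1 ∨ ε n = 0 ∨ ε n = 1) ∧
        cellBand C ξ j =
          {q : X × ℝ | q.1 ∈ C ∧ ∀ n, Real.sign (polyEval E (Φ n) q.1 q.2) = ε n}) := by
  classical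
  have hC' : ∀ x, ∃ h : ℝ ≃o ℝ, x ∈ C → ∀ n t, SignType.sign ((fib E Φ x₀ n).eval t) =
      SignType.sign ((fib E Φ x n).eval (h t)) := by
    intro x
    by_cases c : x ∈ C
    · obtain ⟨h, hh⟩ := hC x c
      exact ⟨h, fun _ => hh⟩
    · exact ⟨OrderIso.refl ℝ, fun h => absurd h c⟩
  choose h hh using hC'
  set F := (rootSet_finite (fib E Φ x₀)).toFinset with hF
  set a : Fin F.card → ℝ := fun j => F.orderEmbOfFin rfl j with ha
  have ham : StrictMono a := (F.orderEmbOfFin rfl).strictMono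
  have har : Set.range a = RootSet (fib E Φ x₀) := by
    exact (F.range_orderEmbOfFin rfl).trans (rootSet_finite (fib E Φ x₀)).coe_toFinset
  have haR : ∀ j, a j ∈ RootSet (fib E Φ x₀) := fun j => by rw [← har]; exact ⟨j, rfl⟩
  have hsg : ∀ x ∈ C, ∀ n t, Real.sign (polyEval E (Φ n) x t) =
      Real.sign ((fib E Φ x₀ n).eval ((h x).symm t)) := by
    intro x hx n t
    rw [realSign_iff, hh x hx, OrderIso.apply_symm_apply]; rfl
  have hband : ∀ (j : Fin (F.card + 1)) (q : X × ℝ),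
      q ∈ cellBand C (fun j x => h x (a j)) j ↔ q.1 ∈ C ∧ (h q.1).symm q.2 ∈ Band a j := by
    intro j q
    simp only [cellBand, Band, Set.mem_ofPred_eq, OrderIso.lt_symm_apply, OrderIso.symm_apply_lt]
  have htri : ∀ r : ℝ, Real.sign r = -1 ∨ Real.sign r = 0 ∨ Real.sign r = 1 := Real.sign_apply_eq
  refine ⟨F.card, fun j x => h x (a j), ?_, ?_, ?_, ?_, ?_, ?_⟩
  · refine roots_continuous hE hP _ (fun x _ i i' hi => (h x).strictMono (ham hi)) fun x hx => ?_
    ext t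
    rw [← (h x).apply_symm_apply t, rootSet_map (h x) (hh x hx), ← har]
    simp only [Set.mem_range, OrderIso.apply_symm_apply]
    exact exists_congr fun y => ((h x).toEquiv.eq_symm_apply).symm
  · exact fun x _ j j' hj => (h x).strictMono (ham hj)
  · intro n j
    refine ⟨Real.sign ((fib E Φ x₀ n).eval (a j)), ?_⟩
    rintro ⟨x, t⟩ ⟨hx, ht⟩
    simp only at hx ht
    simp only [hsg x hx, ht, OrderIso.symm_apply_apply]
  · intro n j
    obtain ⟨s, hs⟩ := band_nonempty ham j
    refine ⟨Real.sign ((fib E Φ x₀ n).eval s), ?_⟩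
    intro q hq
    obtain ⟨hx, ht⟩ := (hband j q).1 hq
    rw [hsg _ hx, realSign_iff]
    exact band_sign ham har j ht hs n
  · intro j
    refine ⟨fun n => Real.sign ((fib E Φ x₀ n).eval (a j)), fun n => htri _, ?_⟩
    ext ⟨x, t⟩
    simp only [cellGraph, Set.mem_ofPred_eq]
    refine and_congr_right fun hx => ⟨fun ht n => ?_, fun ht => ?_⟩
    · rw [hsg x hx, ht, OrderIso.symm_apply_apply]
    · rw [← (h x).symm_apply_eq]
      refine graph_unique (hP x₀) (haR j) fun n => ?_
      rw [← realSign_iff, ← hsg x hx, ht n]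
  · intro j
    obtain ⟨s, hs⟩ := band_nonempty ham j
    refine ⟨fun n => Real.sign ((fib E Φ x₀ n).eval s), fun n => htri _, ?_⟩
    ext q
    rw [hband]
    refine and_congr_right fun hx => ⟨fun ht n => ?_, fun ht => ?_⟩
    · rw [hsg _ hx, realSign_iff]
      exact band_sign ham har j ht hs n
    · refine band_unique (hP x₀) har j hs fun n => ?_
      rw [← realSign_iff, ← hsg _ hx, ht n]

end comp
end CylDec

/-- Theorem 5.2 of the paper; van den Dries, Tame Topology, Ch. 2,
Thm 2.7.  Let `X` be a nonempty topological space and `E` a ring of continuous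
real-valued functions on `X`.  Any list `φ₁, …, φ_M ∈ E[T]` can be augmented to a list
`φ₁, …, φ_N` and `X` partitioned into finitely many `E`-sets `X₁, …, X_k` so that for
each connected component `C` of each `Xᵢ` there are continuous `ξ_{C,1} < ⋯ < ξ_{C,μ(C)}`
on `C` such that (1) each `φ_n` has constant sign on each graph `Γ(ξ_{C,j})` and on each
band `(ξ_{C,j}, ξ_{C,j+1})` (with `ξ_{C,0} = −∞`, `ξ_{C,μ(C)+1} = +∞`), and (2) each such
graph and band is exactly the subset of `C × ℝ` cut out by a sign condition
`ε : {1, …, N} → {−1, 0, 1}` on `φ₁, …, φ_N`. -/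
theorem cylindrical_decomposition
    [Nonempty X] (E : Subring (X → ℝ)) (hE : ∀ f ∈ E, Continuous f)
    (M : ℕ) (φ : Fin M → Polynomial E) :
    ∃ (N : ℕ) (hMN : M ≤ N) (Φ : Fin N → Polynomial E),
      (∀ i : Fin M, Φ (Fin.castLE hMN i) = φ i) ∧
      ∃ (k : ℕ) (Xs : Fin k → Set X),
        (∀ i, IsESet E (Xs i)) ∧
        (⋃ i, Xs i) = Set.univ ∧
        (∀ i j : Fin k, i ≠ j → Disjoint (Xs i) (Xs j)) ∧
        ∀ (i : Fin k) (C : Set X), (∃ x ∈ Xs i, C = connectedComponentIn (Xs i) x) →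
          ∃ (μ : ℕ) (ξ : Fin μ → X → ℝ),
            (∀ j : Fin μ, ContinuousOn (ξ j) C) ∧
            (∀ x ∈ C, ∀ j j' : Fin μ, j < j' → ξ j x < ξ j' x) ∧
            -- (1) constant sign on graphs and bands:
            (∀ n : Fin N, ∀ j : Fin μ, ∃ ε : ℝ,
              ∀ q ∈ cellGraph C ξ j, Real.sign (polyEval E (Φ n) q.1 q.2) = ε) ∧
            (∀ n : Fin N, ∀ j : Fin (μ + 1), ∃ ε : ℝ,
              ∀ q ∈ cellBand C ξ j, Real.sign (polyEval E (Φ n) q.1 q.2) = ε) ∧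
            -- (2) graphs and bands are cut out by sign conditions:
            (∀ j : Fin μ, ∃ ε : Fin N → ℝ, (∀ n, ε n = -1 ∨ ε n = 0 ∨ ε n = 1) ∧
              cellGraph C ξ j =
                {q : X × ℝ | q.1 ∈ C ∧ ∀ n, Real.sign (polyEval E (Φ n) q.1 q.2) = ε n}) ∧
            (∀ j : Fin (μ + 1), ∃ ε : Fin N → ℝ, (∀ n, ε n = -1 ∨ ε n = 0 ∨ ε n = 1) ∧
              cellBand C ξ j =
                {q : X × ℝ | q.1 ∈ C ∧ ∀ n, Real.sign (polyEval E (Φ n) q.1 q.2) = ε n}) := by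
  classical
  obtain ⟨F, hF, hcl⟩ := CylDec.closed_exists (Finset.univ.image φ)
  let Φ : Fin (M + F.card) → Polynomial E := Fin.append φ (fun i => (F.equivFin.symm i).1)
  have hmem : ∀ n, Φ n ∈ F := by
    intro n
    refine Fin.addCases (fun i => ?_) (fun i => ?_) n
    · simp only [Φ, Fin.append_left]
      exact hF (Finset.mem_image_of_mem _ (Finset.mem_univ i))
    · simp only [Φ, Fin.append_right]
      exact (F.equivFin.symm i).2
  have hsurj : ∀ p ∈ F, ∃ n, Φ n = p := by
    intro p hp
    exact ⟨Fin.natAdd M (F.equivFin ⟨p, hp⟩), by simp [Φ]⟩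
  have hP : ∀ x, CylDec.DerClosed (CylDec.fib E Φ x) := by
    intro x n
    by_cases hd : (Φ n).natDegree = 0
    · left
      rw [CylDec.fib, Polynomial.derivative_map, Polynomial.derivative_of_natDegree_zero hd,
        Polynomial.map_zero]
    · right
      obtain ⟨n', hn'⟩ := hsurj _ (hcl.1 (Φ n) (hmem n) (by omega)).1
      exact ⟨n', by rw [CylDec.fib, CylDec.fib, hn', Polynomial.derivative_map]⟩
  let e := Fintype.equivFin (Fin (M + F.card) → SignType)
  let A : (Fin (M + F.card) → SignType) → Set X := fun ε =>
    {x | ∀ n, SignType.sign (CylDec.ev E x (Φ n).leadingCoeff) = ε n}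
  refine ⟨M + F.card, Nat.le_add_right _ _, Φ, ?_, Fintype.card (Fin (M + F.card) → SignType),
    fun i => A (e.symm i), ?_, ?_, ?_, ?_⟩
  · intro i
    exact Fin.append_left φ _ i
  · exact fun i => CylDec.piece_isESet E (fun n => (Φ n).leadingCoeff) (e.symm i)
  · refine Set.eq_univ_of_forall fun x => Set.mem_iUnion.2
      ⟨e fun n => SignType.sign (CylDec.ev E x (Φ n).leadingCoeff), ?_⟩
    rw [Equiv.symm_apply_apply]
    exact fun n => rfl
  · intro i j hij
    refine Set.disjoint_left.2 fun x hx hx' => hij (e.symm.injective ?_)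
    funext n
    rw [← hx n, ← hx' n]
  · rintro i C ⟨x₀, hx₀, rfl⟩
    refine CylDec.component hE hP (mem_connectedComponentIn hx₀) fun x hx => ?_
    have hxA := connectedComponentIn_subset _ _ hx
    obtain ⟨h, hh⟩ := CylDec.main_alg (CylDec.ev E x₀) (CylDec.ev E x) F hcl (by
      intro q hq
      obtain ⟨n, rfl⟩ := hsurj q hq
      rw [hx₀ n, hxA n])
    exact ⟨h, fun n t => hh (Φ n) (hmem n) t⟩
end
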